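/- Let H be a finitely generated subgroup of F(A), let A₀ be the set of letters of A occurring in the labels of transitions of Γ_A(H), and let d = |A₀| − rank(H). Then H is a free factor of F(A) if and only if d ≥ 0 and Γ_A(H) can be transformed into a one-state automaton by a sequence of d i-steps. -/

import Mathlib

open Function

/-- A letter of the symmetrized alphabet Ã: `(a, true)` stands for `a ∈ A` and
`(a, false)` for `a⁻¹ ∈ A⁻¹`. -/
abbrev Ltr (A : Type) := A × Bool

/-- Inversion of letters of Ã. -/
def Ltr.inv {A : Type} (x : Ltr A) : Ltr A := (x.1, !x.2)

/-- The inverse `u⁻¹` of a word `u` over Ã. -/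
def wordInv {A : Type} (w : List (Ltr A)) : List (Ltr A) := (w.map Ltr.inv).reverse

/-- A word over Ã is reduced iff it has no factor of the form `a a⁻¹` or `a⁻¹ a`. -/
def IsReducedWord {A : Type} (w : List (Ltr A)) : Prop :=
  ∀ (u v : List (Ltr A)) (a : A) (b : Bool), w ≠ u ++ (a, b) :: (a, !b) :: v

/-- An automaton over the symmetrized alphabet Ã, with a bundled state type `Q`,
an initial state `q0` and a set `E` of transitions. -/
structure Autom (A : Type) : Type 1 where
  Q : Type
  q0 : Q
  E : Set (Q × Ltr A × Q)

namespace Autom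

variable {A : Type}

/-- Paths using only transitions in the set `T`. -/
inductive PathOn (M : Autom A) (T : Set (M.Q × Ltr A × M.Q)) :
    M.Q → List (Ltr A) → M.Q → Prop
  | nil (q : M.Q) : PathOn M T q [] q
  | cons {p q r : M.Q} {a : Ltr A} {w : List (Ltr A)} :
      (p, a, q) ∈ T → PathOn M T q w r → PathOn M T p (a :: w) r

/-- `M.Path p u q` : the word `u` labels a path from state `p` to state `q` in `M`. -/
def Path (M : Autom A) : M.Q → List (Ltr A) → M.Q → Prop := M.PathOn M.E

/-- The language L(𝒜) of words labeling a path from `q0` to `q0`. -/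
def lang (M : Autom A) : Set (List (Ltr A)) := {w | M.Path M.q0 w M.q0}

/-- The set L(𝒜)ρ of reductions (in the free group `F(A)`) of words of L(𝒜). -/
def langRho (M : Autom A) : Set (FreeGroup A) := FreeGroup.mk '' M.lang

/-- Dual automaton: `(p,a,q)` is an edge iff `(q,a⁻¹,p)` is one. -/
def Dual (M : Autom A) : Prop := ∀ p a q, (p, a, q) ∈ M.E ↔ (q, Ltr.inv a, p) ∈ M.E

/-- Deterministic automaton. -/
def Deterministic (M : Autom A) : Prop :=
  ∀ p a q q', (p, a, q) ∈ M.E → (p, a, q') ∈ M.E → q = q'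

/-- Trim automaton: every state lies on a path from `q0` to `q0`. -/
def Trim (M : Autom A) : Prop := ∀ q, ∃ u v, M.Path M.q0 u q ∧ M.Path q v M.q0

/-- Inverse automaton: deterministic, trim and dual. -/
def IsInv (M : Autom A) : Prop := M.Deterministic ∧ M.Trim ∧ M.Dual

/-- Reduced automaton: every state lies on a path from `q0` to `q0` labeled by
a reduced word. -/
def IsRed (M : Autom A) : Prop :=
  ∀ q, ∃ u v, IsReducedWord (u ++ v) ∧ M.Path M.q0 u q ∧ M.Path q v M.q0

/-- Homomorphisms of automata. -/
def IsHom (M N : Autom A) (φ : M.Q → N.Q) : Prop :=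
  φ M.q0 = N.q0 ∧ ∀ p a q, (p, a, q) ∈ M.E → (φ p, a, φ q) ∈ N.E

/-- Isomorphism of automata. -/
def Isomorphic (M N : Autom A) : Prop :=
  ∃ φ : M.Q ≃ N.Q, M.IsHom N φ ∧ N.IsHom M φ.symm

/-- `N` is (isomorphic to) the automaton obtained from `M` by identifying the two
states `p` and `q`. -/
def IsIdentification (M : Autom A) (p q : M.Q) (N : Autom A) : Prop :=
  ∃ φ : M.Q → N.Q,
    Surjective φ ∧ φ M.q0 = N.q0 ∧
    (∀ x y, φ x = φ y ↔ x = y ∨ (x = p ∧ y = q) ∨ (x = q ∧ y = p)) ∧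
    (∀ e : N.Q × Ltr A × N.Q, e ∈ N.E ↔ ∃ e' ∈ M.E, e = (φ e'.1, e'.2.1, φ e'.2.2))

/-- `N` is (isomorphic to) the automaton obtained from `M` by deleting the state `q`
and all transitions involving it. -/
def IsDeletion (M : Autom A) (q : M.Q) (N : Autom A) : Prop :=
  ∃ φ : N.Q → M.Q,
    Injective φ ∧ Set.range φ = {x | x ≠ q} ∧ φ N.q0 = M.q0 ∧
    (∀ e : N.Q × Ltr A × N.Q, e ∈ N.E ↔ (φ e.1, e.2.1, φ e.2.2) ∈ M.E)

/-- Elementary reduction of type 1. -/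
def Red1 (M N : Autom A) : Prop :=
  ∃ p q r a, p ≠ q ∧ (r, a, p) ∈ M.E ∧ (r, a, q) ∈ M.E ∧ M.IsIdentification p q N

/-- Elementary reduction of type 2. -/
def Red2 (M N : Autom A) : Prop :=
  ∃ (p q : M.Q) (a : Ltr A), q ≠ M.q0 ∧ (p, a, q) ∈ M.E ∧ (q, Ltr.inv a, p) ∈ M.E ∧
    (∀ e ∈ M.E, e.1 = q ∨ e.2.2 = q → e = (p, a, q) ∨ e = (q, Ltr.inv a, p)) ∧
    M.IsDeletion q N

/-- `N` is (isomorphic to) the reduction `Mρ` of `M`: perform elementary reductions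
of type 1 until the automaton is deterministic, then elementary reductions of type 2
until none is possible. -/
def ReductionOf (M N : Autom A) : Prop :=
  ∃ M₁, Relation.ReflTransGen Red1 M M₁ ∧ M₁.Deterministic ∧
    Relation.ReflTransGen Red2 M₁ N ∧ ∀ N', ¬ Red2 N N'

/-- `N` is (isomorphic to) the expansion of `M` by `(p, w, q)`: a new path labeled `w`
from `p` to `q` (together with its inverse path) whose intermediate states are new. -/
def IsExpansion (M : Autom A) (p : M.Q) (w : List (Ltr A)) (q : M.Q) (N : Autom A) : Prop :=
  w ≠ [] ∧
  ∃ (φ : M.Q → N.Q) (c : Fin (w.length + 1) → N.Q),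
    Injective φ ∧ φ M.q0 = N.q0 ∧ c 0 = φ p ∧ c (Fin.last w.length) = φ q ∧
    (∀ i : Fin (w.length + 1), 0 < (i : ℕ) → (i : ℕ) < w.length → c i ∉ Set.range φ) ∧
    (∀ i j : Fin (w.length + 1), 0 < (i : ℕ) → (i : ℕ) < w.length → c i = c j → i = j) ∧
    (∀ x : N.Q, (∃ y, φ y = x) ∨ ∃ i, c i = x) ∧
    (∀ e : N.Q × Ltr A × N.Q, e ∈ N.E ↔
      ((∃ e' ∈ M.E, e = (φ e'.1, e'.2.1, φ e'.2.2)) ∨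
        ∃ i : Fin w.length,
          e = (c i.castSucc, w.get i, c i.succ) ∨
          e = (c i.succ, Ltr.inv (w.get i), c i.castSucc)))

/-- `M →exp^{(p,w,q)} N` : `N` is (isomorphic to) the reduction of the expansion
of `M` by `(p,w,q)`. -/
def ExpStep (M : Autom A) (p : M.Q) (w : List (Ltr A)) (q : M.Q) (N : Autom A) : Prop :=
  ∃ N' N'', M.IsExpansion p w q N' ∧ ReductionOf N' N'' ∧ Isomorphic N'' N

/-- `M →re^{(p,w,q)} N` : a reduced expansion, i.e. an expansion-then-reduction in which
`M` embeds in `N`. -/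
def REStep (M : Autom A) (p : M.Q) (w : List (Ltr A)) (q : M.Q) (N : Autom A) : Prop :=
  M.ExpStep p w q N ∧ ∃ ψ : M.Q → N.Q, Injective ψ ∧ M.IsHom N ψ

/-- `M →e^{w} N` : an e-step, i.e. `M →exp^{(q0,w,q0)} N`. -/
def EStep (M : Autom A) (w : List (Ltr A)) (N : Autom A) : Prop :=
  M.ExpStep M.q0 w M.q0 N

/-- `M →i^{p=q} N` : an i-step; `N` is (isomorphic to) the reduction of the automaton
obtained from `M` by identifying the distinct states `p` and `q`. -/
def IStep (M : Autom A) (p q : M.Q) (N : Autom A) : Prop :=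
  p ≠ q ∧ ∃ N' N'', M.IsIdentification p q N' ∧ ReductionOf N' N'' ∧ Isomorphic N'' N

/-- i-step, allowing `p = q` (in which case nothing happens). -/
def IStep' (M : Autom A) (p q : M.Q) (N : Autom A) : Prop :=
  (p = q ∧ M.Isomorphic N) ∨ M.IStep p q N

/-- `M →i N` : some i-step applies. -/
def IStepAny (M N : Autom A) : Prop := ∃ p q, M.IStep p q N

/-- Some reduced expansion (by a nonempty reduced word) applies. -/
def REStepAny (M N : Autom A) : Prop :=
  ∃ p w q, IsReducedWord w ∧ M.REStep p w q N

/-- `M` is (isomorphic to) `Γ_A(H)` : a reduced inverse automaton with `L(M)ρ = H`. -/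
def Represents (M : Autom A) (H : Subgroup (FreeGroup A)) : Prop :=
  M.IsInv ∧ M.IsRed ∧ M.langRho = ↑H

/-- The `q0`-diameter of an automaton: the maximum over all states `q` of the minimal
length of a reduced word labeling a path from `q0` to `q`. -/
noncomputable def diam (M : Autom A) : ℕ :=
  ⨆ q : M.Q, sInf {n | ∃ u, IsReducedWord u ∧ u.length = n ∧ M.Path M.q0 u q}

end Autom

/-- `S` is a basis of the subgroup `H`: `S` generates `H` and freely so. -/
def IsFreeBasis {G : Type} [Group G] (S : Set G) (H : Subgroup G) : Prop :=
  Subgroup.closure S = H ∧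
    Injective (FreeGroup.lift (Subtype.val : S → G) : FreeGroup S →* G)

/-- `H ≤ff K` : `H` is a free factor of `K`. -/
def FreeFactor {G : Type} [Group G] (H K : Subgroup G) : Prop :=
  ∃ B C : Set G, IsFreeBasis B H ∧ IsFreeBasis C K ∧ B ⊆ C

/-- The rank of a subgroup: the cardinality of a basis (the common value of
the cardinalities of all bases, when `H` is a finite-rank free group). -/
noncomputable def rk {G : Type} [Group G] (H : Subgroup G) : ℕ :=
  sInf {n | ∃ S : Set G, IsFreeBasis S H ∧ S.ncard = n}

/-- `L` is a graphical free factor of `K` with respect to `A`: `Γ_A(L)` embeds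
in `Γ_A(K)`. -/
def GraphicalFF {A : Type} (L K : Subgroup (FreeGroup A)) : Prop :=
  L ≤ K ∧ ∃ ML MK : Autom A, ML.Represents L ∧ MK.Represents K ∧
    ∃ ψ : ML.Q → MK.Q, Injective ψ ∧ ML.IsHom MK ψ

/-- A step (i-step or reduced expansion) from `M` to `N` of cost `c`. -/
def StepCost {A : Type} (M N : Autom A) (c : ℕ) : Prop :=
  (c = 0 ∧ Autom.IStepAny M N) ∨
  (∃ p w q, IsReducedWord w ∧ w.length = c ∧ M.REStep p w q N)

/-- The well-order `≺` on cost sequences. -/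
def costLT (k l : List ℕ) : Prop :=
  k.length < l.length ∨
  (k.length = l.length ∧ k.sum < l.sum) ∨
  (k.length = l.length ∧ k.sum = l.sum ∧ List.Lex (· < ·) k l)

/-!
Let `F₀` be the free group on the set `A₀` of letters of `Γ_A(H)`. By Nielsen–Schreier, `H` is a
free factor of `F(A)` if and only if it is one of `F₀`, and since free groups of finite rank are
Hopfian this happens if and only if `H` together with `|A₀| - rank(H)` further elements generates
`F₀`. It remains to compare, for a finite set `T` of elements, generation of `F₀` by `H ∪ T` with
collapsing `Γ_A(H)` to a single state by at most `|T|` i-steps; no fewer than `|A₀| - rank(H)`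
elements or i-steps can suffice.

An i-step identifying `p` and `q` adjoins to the subgroup the element `u v⁻¹`, where `u` and `v`
label paths from `q₀` to `p` and to `q`. Conversely, let `X` be a set acted upon by the free group
and consider the maps `θ` from the states of `Γ_A(H)` to `X` with `θ p = a • θ q` for every
transition `(p, a, q)`. If `H ∪ T` generates `F₀`, then the equations `θ q₀ = t • θ q₀` for `t ∈ T`
force every such `θ` to be constant. Each of these equations is traded for an equality between two
states: writing `t = c w`, subdivide the corresponding loop at a new state `z`, so that it becomes
an edge labelled `c` and a shorter arc labelled `w`; trade that arc for an equality; replace the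
edge by an equality, which is possible because partial bijections of a finite set extend to
permutations; and eliminate `z`. Identifying the resulting pairs of states one after the other
collapses `Γ_A(H)`.
-/

/-! ### Free groups acting on finite sets -/

theorem exists_perm_of_biUnique {X : Type*} [Finite X] {r : X → X → Prop}
    (hr : Relator.BiUnique r) : ∃ σ : Equiv.Perm X, ∀ x y, r x y → σ x = y := by
  classical
  have hfun (x : {x // ∃ y, r x y}) : r x x.2.choose := x.2.choose_spec
  let e : {x // ∃ y, r x y} ≃ {y // ∃ x, r x y} :=
    Equiv.ofBijective (fun x => ⟨x.2.choose, x, hfun x⟩)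
      ⟨fun x x' h => Subtype.ext (hr.1 (hfun x) (by
          rw [show x.2.choose = x'.2.choose from congrArg Subtype.val h]; exact hfun x')),
        fun ⟨y, x, hxy⟩ => ⟨⟨x, y, hxy⟩, Subtype.ext (hr.2 (hfun ⟨x, y, hxy⟩) hxy)⟩⟩
  refine ⟨e.extendSubtype, fun x y hxy => ?_⟩
  rw [e.extendSubtype_apply_of_mem x ⟨y, hxy⟩]
  exact hr.2 (hfun ⟨x, y, hxy⟩) hxy

theorem exists_mulAction_of_biUnique {A X : Type*} [Finite X] {r : A → X → X → Prop}
    (hr : ∀ a, Relator.BiUnique (r a)) :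
    ∃ _ : MulAction (FreeGroup A) X, ∀ a x y, r a x y → FreeGroup.of a • x = y := by
  choose σ hσ using fun a => exists_perm_of_biUnique (hr a)
  refine ⟨MulAction.compHom X (FreeGroup.lift σ), fun a x y hxy => ?_⟩
  change FreeGroup.lift σ (FreeGroup.of a) x = y
  rw [FreeGroup.lift_apply_of, hσ a x y hxy]

theorem freeGroup_mk_cons {A : Type*} (a : A × Bool) (w : List (A × Bool)) :
    FreeGroup.mk (a :: w) = FreeGroup.mk [a] * FreeGroup.mk w :=
  (FreeGroup.mul_mk (L₁ := [a])).symm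

/-- The action exists on the finite set of suffixes of the reduced word of `g`, where each
letter is prescribed to act by left multiplication as long as the result is again a suffix. -/
theorem exists_finite_mulAction_smul_ne {A : Type*} {g : FreeGroup A} (hg : g ≠ 1) :
    ∃ (X : Set (FreeGroup A)) (_ : X.Finite) (_ : MulAction (FreeGroup A) X) (x : X),
      g • x ≠ x := by
  classical
  let X : Set (FreeGroup A) := FreeGroup.mk '' {w | w <:+ g.toWord}
  have hX : X.Finite := by
    refine Set.Finite.image _ ((List.finite_toSet g.toWord.tails).subset fun w hw => ?_)
    simpa using hw
  have : Finite X := hX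
  obtain ⟨act, hact⟩ := exists_mulAction_of_biUnique (A := A) (X := X)
    (r := fun a x y => (y : FreeGroup A) = FreeGroup.of a * x)
    fun a => ⟨fun x x' y h h' => Subtype.ext (mul_left_cancel (h.symm.trans h')),
      fun x y y' h h' => Subtype.ext (h.trans h'.symm)⟩
  let one : X := ⟨1, [], List.nil_suffix, rfl⟩
  have hsuffix : ∀ w : List (A × Bool), w <:+ g.toWord →
      ((FreeGroup.mk w • one : X) : FreeGroup A) = FreeGroup.mk w := by
    intro w
    induction w with
    | nil => exact fun _ => congrArg Subtype.val (one_smul _ one)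
    | cons l w ih =>
      intro hw
      let next : X := ⟨FreeGroup.mk (l :: w), l :: w, hw, rfl⟩
      have ih := ih ((List.suffix_cons l w).trans hw)
      suffices FreeGroup.mk [l] • FreeGroup.mk w • one = next by
        rw [freeGroup_mk_cons, mul_smul, this, ← freeGroup_mk_cons]
      obtain ⟨a, b⟩ := l
      cases b with
      | true => exact hact _ _ _ (by rw [ih]; exact freeGroup_mk_cons _ _)
      | false =>
        have hinv : FreeGroup.mk [(a, false)] = (FreeGroup.of a)⁻¹ := rfl
        rw [hinv, inv_smul_eq_iff]
        exact (hact _ _ _ (by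
          rw [ih, show (next : FreeGroup A) = _ from freeGroup_mk_cons _ _, hinv,
            mul_inv_cancel_left])).symm
  refine ⟨X, hX, act, one, fun h => hg ?_⟩
  rw [← FreeGroup.mk_toWord (x := g), ← hsuffix _ List.suffix_rfl, FreeGroup.mk_toWord, h]

theorem residuallyFinite_freeGroup (A : Type*) : Group.ResiduallyFinite (FreeGroup A) := by
  rw [Group.residuallyFinite_iff_exists_finiteIndex]
  intro g hg
  obtain ⟨X, hX, act, x, hx⟩ := exists_finite_mulAction_smul_ne hg
  have : Finite X := hX
  refine ⟨MulAction.stabilizer _ x, ⟨?_⟩, hx⟩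
  rw [MulAction.index_stabilizer]
  exact Set.ncard_ne_zero_of_mem (MulAction.mem_orbit_self x)

/-! ### The Hopf property -/

theorem finite_monoidHom_of_fg (G P : Type*) [Group G] [Group.FG G] [Group P] [Finite P] :
    Finite (G →* P) := by
  obtain ⟨S, hS⟩ := Group.FG.out (G := G)
  refine Finite.of_injective (fun (φ : G →* P) (s : S) => φ s) fun φ ψ h => ?_
  exact MonoidHom.eq_of_eqOn_dense hS fun s hs => congrFun h ⟨s, hs⟩

/-- Malcev's argument: for a finite group `P`, precomposition with `ψ` is an injective, hence
surjective, self-map of the finite set `G →* P`, so every map to a finite group kills `ker ψ`. -/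
theorem injective_of_surjective_of_residuallyFinite {G : Type*} [Group G] [Group.FG G]
    [Group.ResiduallyFinite G] {ψ : G →* G} (hψ : Surjective ψ) : Injective ψ := by
  refine (injective_iff_map_eq_one ψ).2 fun g hg => by_contra fun hne => ?_
  obtain ⟨N, hN⟩ := Group.exists_finiteIndexNormalSubgroup_notMem g hne
  have := finite_monoidHom_of_fg G (G ⧸ N.toSubgroup)
  obtain ⟨χ, hχ⟩ := Finite.surjective_of_injective
    (f := fun χ : G →* G ⧸ N.toSubgroup => χ.comp ψ)
    (fun _ _ h => (MonoidHom.cancel_right hψ).1 h) (QuotientGroup.mk' N.toSubgroup)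
  refine hN ((QuotientGroup.eq_one_iff (N := N.toSubgroup) g).1 ?_)
  calc QuotientGroup.mk' N.toSubgroup g = χ (ψ g) := (DFunLike.congr_fun hχ g).symm
    _ = 1 := by rw [hg, map_one]

/-! ### Bases -/

theorem monoidHom_ext_of_closure_eq {G P : Type*} [Group G] [Group P] {S : Set G} {H : Subgroup G}
    (hS : Subgroup.closure S = H) {φ ψ : H →* P} (h : ∀ s : H, (s : G) ∈ S → φ s = ψ s) :
    φ = ψ := by
  subst hS
  exact MonoidHom.eq_of_eqOn_dense Subgroup.closure_closure_coe_preimage h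

namespace IsFreeBasis

variable {G : Type} [Group G] {S B C : Set G} {H K : Subgroup G}

theorem subset (h : IsFreeBasis S H) : S ⊆ H := h.1 ▸ Subgroup.subset_closure

/-- The isomorphism with the abstract free group that comes with a basis. -/
noncomputable def equiv (h : IsFreeBasis S H) : FreeGroup S ≃* H :=
  (MonoidHom.ofInjective h.2).trans
    (MulEquiv.subgroupCongr (by rw [FreeGroup.range_lift_eq_closure, Subtype.range_coe, h.1]))

theorem equiv_of (h : IsFreeBasis S H) (s : S) :
    h.equiv (FreeGroup.of s) = ⟨s, h.subset s.2⟩ :=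
  Subtype.ext (FreeGroup.lift_apply_of ..)

theorem exists_monoidHom (h : IsFreeBasis S H) {P : Type*} [Group P] (f : S → P) :
    ∃ Φ : H →* P, ∀ s : S, Φ ⟨s, h.subset s.2⟩ = f s :=
  ⟨(FreeGroup.lift f).comp h.equiv.symm.toMonoidHom, fun s => by simp [← h.equiv_of s]⟩

theorem exists_monoidHom_of_top (h : IsFreeBasis S (⊤ : Subgroup G)) {P : Type*} [Group P]
    (f : S → P) : ∃ Φ : G →* P, ∀ s : S, Φ s = f s :=
  have ⟨Φ, hΦ⟩ := h.exists_monoidHom f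
  ⟨Φ.comp (Subgroup.topEquiv (G := G)).symm.toMonoidHom, hΦ⟩

theorem of_monoidHom (Φ : Subgroup.closure S →* FreeGroup S)
    (hΦ : ∀ s : S, Φ ⟨s, Subgroup.subset_closure s.2⟩ = FreeGroup.of s) :
    IsFreeBasis S (Subgroup.closure S) := by
  let j : FreeGroup S →* Subgroup.closure S :=
    FreeGroup.lift fun s => ⟨s, Subgroup.subset_closure s.2⟩
  have hj : (Subgroup.closure S).subtype.comp j = FreeGroup.lift Subtype.val :=
    FreeGroup.ext_hom _ _ fun s => by simp [j]
  have hΦj : Φ.comp j = MonoidHom.id _ := FreeGroup.ext_hom _ _ fun s => by simp [j, hΦ]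
  refine ⟨rfl, ?_⟩
  rw [← hj]
  exact Subtype.val_injective.comp (LeftInverse.injective (DFunLike.congr_fun hΦj))

theorem one_notMem (h : IsFreeBasis S H) : (1 : G) ∉ S := fun h1 =>
  FreeGroup.of_ne_one (⟨1, h1⟩ : S) (h.2 (by rw [FreeGroup.lift_apply_of, map_one]))

theorem mono (hC : IsFreeBasis C K) (hBC : B ⊆ C) : IsFreeBasis B (Subgroup.closure B) := by
  have hlift : FreeGroup.lift (Subtype.val : B → G) =
      (FreeGroup.lift Subtype.val).comp (FreeGroup.map (Set.inclusion hBC)) :=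
    FreeGroup.ext_hom _ _ fun s => by simp
  refine ⟨rfl, ?_⟩
  rw [hlift]
  exact hC.2.comp (FreeGroup.map_injective (Set.inclusion_injective hBC))

/-- Maps from a basis to the group `ℤˣ` of order two extend to homomorphisms, which are determined
by their values on any generating set. -/
theorem finite_and_ncard_le (hC : IsFreeBasis C H) (hS : Subgroup.closure S = H)
    (hfin : S.Finite) : C.Finite ∧ C.ncard ≤ S.ncard := by
  subst hS
  have := hfin.to_subtype
  choose Φ hΦ using fun f : C → ℤˣ => hC.exists_monoidHom f
  have hinj : Injective fun (f : C → ℤˣ) (s : S) => Φ f ⟨s, Subgroup.subset_closure s.2⟩ := by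
    intro f g hfg
    have : Φ f = Φ g := monoidHom_ext_of_closure_eq rfl fun s hs => congrFun hfg ⟨s, hs⟩
    funext c
    rw [← hΦ f, ← hΦ g, this]
  have hpow : Finite (C → ℤˣ) := Finite.of_injective _ hinj
  have : Nontrivial ℤˣ := ⟨1, -1, by decide⟩
  have hCfin : Finite C :=
    not_infinite_iff_finite.1 fun _ => Pi.infinite_of_left.not_finite hpow
  have hcard := Nat.card_le_card_of_injective _ hinj
  rw [Nat.card_fun, Nat.card_fun, Nat.card_eq_fintype_card (α := ℤˣ), Fintype.card_units_int,
    Nat.pow_le_pow_iff_right one_lt_two, Nat.card_coe_set_eq, Nat.card_coe_set_eq] at hcard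
  exact ⟨hCfin, hcard⟩

theorem ncard_eq (hB : IsFreeBasis B H) (hC : IsFreeBasis C H) : B.ncard = C.ncard := by
  by_cases hfin : B.Finite
  · obtain ⟨hCfin, hCB⟩ := hC.finite_and_ncard_le hB.1 hfin
    exact (hB.finite_and_ncard_le hC.1 hCfin).2.antisymm hCB
  · have hCinf : ¬ C.Finite := fun hCfin => hfin (hB.finite_and_ncard_le hC.1 hCfin).1
    rw [Set.Infinite.ncard hfin, Set.Infinite.ncard hCinf]

theorem rk_eq (hB : IsFreeBasis B H) : rk H = B.ncard := by
  have : {n | ∃ S : Set G, IsFreeBasis S H ∧ S.ncard = n} = {B.ncard} :=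
    Set.eq_singleton_iff_unique_mem.2 ⟨⟨B, hB, rfl⟩, fun _ ⟨_, hS, hn⟩ => hn ▸ hS.ncard_eq hB⟩
  rw [rk, this, csInf_singleton]

theorem of_ncard_le (hC : IsFreeBasis C H) (hS : Subgroup.closure S = H) (hfin : S.Finite)
    (hcard : S.ncard ≤ C.ncard) : IsFreeBasis S H := by
  obtain ⟨hCfin, hCS⟩ := hC.finite_and_ncard_le hS hfin
  have := hCfin.to_subtype
  have := hfin.to_subtype
  obtain ⟨e⟩ : Nonempty (C ≃ S) :=
    (Finite.card_eq).1 (by simpa only [Nat.card_coe_set_eq] using hCS.antisymm hcard)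
  have hrange : (FreeGroup.lift (Subtype.val : S → G)).range = H := by
    rw [FreeGroup.range_lift_eq_closure, Subtype.range_coe, hS]
  let j : FreeGroup S →* H := (MulEquiv.subgroupCongr hrange).toMonoidHom.comp
    (FreeGroup.lift (Subtype.val : S → G)).rangeRestrict
  have hj : Surjective j := (MulEquiv.subgroupCongr hrange).surjective.comp
    (FreeGroup.lift (Subtype.val : S → G)).rangeRestrict_surjective
  let ψ : FreeGroup C →* FreeGroup C :=
    hC.equiv.symm.toMonoidHom.comp (j.comp (FreeGroup.freeGroupCongr e).toMonoidHom)
  have := residuallyFinite_freeGroup C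
  have hψ : Injective ψ := injective_of_surjective_of_residuallyFinite
    (hC.equiv.symm.surjective.comp (hj.comp (FreeGroup.freeGroupCongr e).surjective))
  have hjinj : Injective j := by
    have : Injective (j ∘ FreeGroup.freeGroupCongr e) :=
      Injective.of_comp (f := hC.equiv.symm) hψ
    exact (Injective.of_comp_iff' j (FreeGroup.freeGroupCongr e).bijective).1 this
  exact ⟨hS, Subtype.val_injective.comp hjinj⟩

end IsFreeBasis

/-! ### The Nielsen–Schreier theorem -/

section Schreier

variable {G : Type} [Group G] {C : Set G} {K : Subgroup G}

/-- A cocycle is the left component of a homomorphism to the wreath product `(X → P) ⋊ G`. -/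
theorem IsFreeBasis.exists_cocycle (hC : IsFreeBasis C (⊤ : Subgroup G)) {X P : Type}
    [MulAction G X] [Group P] (f : G → X → P) :
    ∃ m : G → X → P, (∀ c ∈ C, ∀ x, m c x = f c x) ∧
      ∀ g h x, m (g * h) x = m g (h • x) * m h x := by
  obtain ⟨Φ, hΦ⟩ := hC.exists_monoidHom_of_top
    fun c : C => (⟨fun x => f c ((c : G)⁻¹ • x), c⟩ : (X → P) ⋊[mulAutArrow] G)
  have hright : SemidirectProduct.rightHom.comp Φ = MonoidHom.id G :=
    MonoidHom.eq_of_eqOn_dense hC.1 fun c hc => by simp [hΦ ⟨c, hc⟩]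
  have hright : ∀ g, (Φ g).right = g := DFunLike.congr_fun hright
  refine ⟨fun g x => (Φ g).left (g • x), fun c hc x => ?_, fun g h x => ?_⟩
  · simp [hΦ ⟨c, hc⟩]
  · change (Φ (g * h)).left _ = _
    rw [map_mul, SemidirectProduct.mul_left, hright, Pi.mul_apply, mul_smul]
    congr 1
    change (Φ h).left (g⁻¹ • g • h • x) = _
    rw [inv_smul_smul]

/-- A transversal `t` of the left cosets of `K` is Schreier with respect to `C` if the edges from
`x` to `c • x` with `t (c • x) = c * t x` connect the Schreier graph (they form a spanning tree);
connectedness is expressed as an induction principle. -/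
structure IsSchreierTransversal (C : Set G) (K : Subgroup G) (t : G ⧸ K → G) : Prop where
  map_one : t (1 : G) = 1
  mk_apply (x : G ⧸ K) : (t x : G ⧸ K) = x
  induction {p : G ⧸ K → Prop} (base : p (1 : G))
    (step : ∀ c ∈ C, ∀ x, t (c • x) = c * t x → (p x ↔ p (c • x))) (x : G ⧸ K) : p x

theorem exists_list_prod_mk_eq (hC : Subgroup.closure C = ⊤) (x : G ⧸ K) :
    ∃ w : List G, (∀ g ∈ w, g ∈ C ∪ C⁻¹) ∧ (w.prod : G ⧸ K) = x := by
  obtain ⟨g, rfl⟩ := QuotientGroup.mk_surjective x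
  have hg : g ∈ Submonoid.closure (C ∪ C⁻¹) := by
    rw [← Subgroup.closure_toSubmonoid, hC]
    trivial
  obtain ⟨w, hw, rfl⟩ := Submonoid.exists_list_of_mem_closure hg
  exact ⟨w, hw, rfl⟩

/-- Representatives that are minimal in the shortlex order are closed under taking suffixes. -/
theorem exists_isSchreierTransversal (hC : Subgroup.closure C = ⊤) (K : Subgroup G) :
    ∃ t, IsSchreierTransversal C K t := by
  let words (x : G ⧸ K) : Set (List G) := {w | (∀ g ∈ w, g ∈ C ∪ C⁻¹) ∧ (w.prod : G ⧸ K) = x}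
  have hwords (x : G ⧸ K) : (words x).Nonempty := exists_list_prod_mk_eq hC x
  let lt : List G → List G → Prop := List.Shortlex WellOrderingRel
  have hwf : WellFounded lt := List.Shortlex.wf WellOrderingRel.isWellOrder.wf
  have htri : Std.Trichotomous lt := List.Shortlex.trichotomous
  let m (x : G ⧸ K) : List G := hwf.min (words x) (hwords x)
  have hm (x : G ⧸ K) : m x ∈ words x := hwf.min_mem ..
  have hm_eq {w : List G} {x : G ⧸ K} (hw : w ∈ words x) (hmin : ∀ v ∈ words x, ¬ lt v w) :
      m x = w :=
    htri.trichotomous _ _ (hmin _ (hm x)) (hwf.not_lt_min _ hw)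
  have hm_tail {x : G ⧸ K} {g : G} {w : List G} (hx : m x = g :: w) : m (w.prod : G) = w := by
    obtain ⟨hletters, hprod⟩ : g :: w ∈ words x := hx ▸ hm x
    refine hm_eq ⟨fun _ h => hletters _ (List.mem_cons_of_mem g h), rfl⟩ fun v hv hlt => ?_
    have hlt' : lt (g :: v) (m x) := hx ▸ hlt.append_left [g]
    refine hwf.not_lt_min (words x) (x := g :: v) ⟨?_, ?_⟩ hlt'
    · exact List.forall_mem_cons.2 ⟨hletters g List.mem_cons_self, hv.1⟩
    · rw [List.prod_cons] at hprod ⊢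
      rw [← hprod]
      exact congrArg (g • ·) hv.2
  have hm_one : m (1 : G) = [] :=
    hm_eq ⟨fun _ h => absurd h List.not_mem_nil, rfl⟩ fun _ _ => List.not_shortlex_nil_right
  refine ⟨fun x => (m x).prod, by simp [hm_one], fun x => (hm x).2, fun {p} base step x => ?_⟩
  induction hw : m x generalizing x with
  | nil => exact (by simpa [hw] using (hm x).2 : (1 : G) = x) ▸ base
  | cons g w ih =>
    have htail := hm_tail hw
    have hx : x = g • ((w.prod : G) : G ⧸ K) := by
      rw [← (hm x).2, hw, List.prod_cons]; rfl
    rcases (hm x).1 g (hw ▸ List.mem_cons_self) with hg | hg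
    · have := step g hg (w.prod : G)
      rw [← hx, hw, htail, List.prod_cons] at this
      exact (this rfl).1 (ih _ htail)
    · have := step g⁻¹ hg x
      rw [← (eq_inv_smul_iff.2 hx.symm : _ = g⁻¹ • x), hw, htail, List.prod_cons,
        inv_mul_cancel_left] at this
      exact (this rfl).2 (ih _ htail)

theorem smul_mk_one_of_mem {k : G} (hk : k ∈ K) : k • ((1 : G) : G ⧸ K) = (1 : G) :=
  QuotientGroup.eq.2 (by simpa using hk)

namespace IsSchreierTransversal

variable {t : G ⧸ K → G}

/-- The Schreier generators of `K`: each edge from `x` to `c • x` outside the spanning tree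
contributes one. -/
def generators (C : Set G) (t : G ⧸ K → G) : Set G :=
  {g | ∃ c ∈ C, ∃ x, g = (t (c • x))⁻¹ * c * t x} \ {1}

theorem smul_mk_one (ht : IsSchreierTransversal C K t) (x : G ⧸ K) :
    t x • ((1 : G) : G ⧸ K) = x :=
  (congrArg QuotientGroup.mk (mul_one (t x))).trans (ht.mk_apply x)

theorem closure_generators (ht : IsSchreierTransversal C K t) (hC : Subgroup.closure C = ⊤) :
    Subgroup.closure (generators C t) = K := by
  refine le_antisymm ((Subgroup.closure_le K).2 ?_) fun k hk => ?_
  · rintro _ ⟨⟨c, -, x, rfl⟩, -⟩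
    have h : ((t (c • x) : G) : G ⧸ K) = ((c * t x : G) : G ⧸ K) := by
      rw [ht.mk_apply]
      exact (congrArg (c • ·) (ht.mk_apply x)).symm
    rw [mul_assoc]
    exact QuotientGroup.eq.1 h
  · have hall : ∀ g : G, ∀ x, (t (g • x))⁻¹ * g * t x ∈ Subgroup.closure (generators C t) := by
      intro g
      have hg : g ∈ Subgroup.closure C := hC ▸ Subgroup.mem_top g
      induction hg using Subgroup.closure_induction with
      | mem c hc =>
        intro x
        by_cases h1 : (t (c • x))⁻¹ * c * t x = 1
        · rw [h1]; exact one_mem _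
        · exact Subgroup.subset_closure ⟨⟨c, hc, x, rfl⟩, h1⟩
      | one => intro x; simp
      | mul g h _ _ ihg ihh =>
        intro x
        convert mul_mem (ihg (h • x)) (ihh x) using 1
        rw [mul_smul]; group
      | inv g _ ih =>
        intro x
        convert inv_mem (ih (g⁻¹ • x)) using 1
        rw [smul_inv_smul]; group
    simpa [smul_mk_one_of_mem hk, ht.map_one] using hall k (1 : G)

/-- The cocycle that sends each edge of the Schreier graph to the corresponding free generator
restricts to a homomorphism on `K` that inverts the map from the free group. -/
theorem isFreeBasis_generators (ht : IsSchreierTransversal C K t)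
    (hC : IsFreeBasis C (⊤ : Subgroup G)) : IsFreeBasis (generators C t) K := by
  classical
  let D := generators C t
  let gen (g : G) : FreeGroup D := if h : g ∈ D then FreeGroup.of ⟨g, h⟩ else 1
  obtain ⟨m, hm, hmul⟩ := hC.exists_cocycle (X := G ⧸ K) fun c x => gen ((t (c • x))⁻¹ * c * t x)
  let x₀ : G ⧸ K := (1 : G)
  have hgen_one : gen 1 = 1 := dif_neg fun h => h.2 rfl
  have hm_one (x : G ⧸ K) : m 1 x = 1 := by simpa using hmul 1 1 x
  have hm_t (x : G ⧸ K) : m (t x) x₀ = 1 := by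
    refine ht.induction (p := fun x => m (t x) x₀ = 1) ?_ (fun c hc x hx => ?_) x
    · rw [ht.map_one, hm_one]
    · rw [hx, hmul, ht.smul_mk_one, hm c hc, hx, mul_assoc, inv_mul_cancel, hgen_one, one_mul]
  have hclosure := ht.closure_generators hC.1
  let Φ : K →* FreeGroup D :=
    MonoidHom.mk' (fun k => m k x₀) fun k l => by
      rw [Subgroup.coe_mul, hmul, smul_mk_one_of_mem l.2]
  suffices IsFreeBasis D (Subgroup.closure D) by rwa [hclosure] at this
  refine IsFreeBasis.of_monoidHom (Φ.comp (Subgroup.inclusion hclosure.le)) ?_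
  rintro ⟨s, hs⟩
  obtain ⟨⟨c, hc, x, hsx⟩, -⟩ := id hs
  have hsK : s • x₀ = x₀ := smul_mk_one_of_mem (hclosure ▸ Subgroup.subset_closure hs)
  change m s x₀ = _
  calc m s x₀ = m (t (c • x)) (s • x₀) * m s x₀ := by rw [hsK, hm_t, one_mul]
    _ = m (c * t x) x₀ := by rw [← hmul, hsx, mul_assoc, mul_inv_cancel_left]
    _ = m c x := by rw [hmul, ht.smul_mk_one, hm_t, mul_one]
    _ = gen s := by rw [hm c hc, hsx]
    _ = FreeGroup.of ⟨s, hs⟩ := dif_pos hs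

end IsSchreierTransversal

theorem IsFreeBasis.exists_isFreeBasis_inter_subset (hC : IsFreeBasis C (⊤ : Subgroup G))
    (K : Subgroup G) : ∃ D, IsFreeBasis D K ∧ C ∩ K ⊆ D := by
  obtain ⟨t, ht⟩ := exists_isSchreierTransversal hC.1 K
  refine ⟨_, ht.isFreeBasis_generators hC, fun c ⟨hc, hcK⟩ => ⟨⟨c, hc, (1 : G), ?_⟩, ?_⟩⟩
  · rw [smul_mk_one_of_mem hcK, ht.map_one, inv_one, one_mul, mul_one]
  · exact fun h => hC.one_notMem (h ▸ hc)

end Schreier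

/-! ### Free factors -/

section FreeFactor

variable {G : Type} [Group G] {H K L : Subgroup G}

theorem FreeFactor.of_le (h : FreeFactor H (⊤ : Subgroup G)) (hHK : H ≤ K) : FreeFactor H K := by
  obtain ⟨B, C, hB, hC, hBC⟩ := h
  obtain ⟨D, hD, hCD⟩ := hC.exists_isFreeBasis_inter_subset K
  exact ⟨B, D, hB, hD, fun b hb => hCD ⟨hBC hb, hHK (hB.subset hb)⟩⟩

theorem IsFreeBasis.union_sdiff {C D E : Set G} (hC : IsFreeBasis C K) (hD : IsFreeBasis D K)
    (hE : IsFreeBasis E L) (hDE : D ⊆ E) : IsFreeBasis (C ∪ E \ D) L := by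
  classical
  set S := C ∪ E \ D
  have hclosure : Subgroup.closure S = L := by
    rw [Subgroup.closure_union, hC.1, ← hD.1, ← Subgroup.closure_union, Set.union_sdiff_self,
      Set.union_eq_self_of_subset_left hDE, hE.1]
  have hKL : K ≤ L := hD.1 ▸ hE.1 ▸ Subgroup.closure_mono hDE
  obtain ⟨Ψ, hΨ⟩ := hC.exists_monoidHom fun c => FreeGroup.of (⟨c, Or.inl c.2⟩ : S)
  obtain ⟨Φ, hΦ⟩ := hE.exists_monoidHom fun e =>
    if he : (e : G) ∈ D then Ψ ⟨e, hD.subset he⟩ else FreeGroup.of (⟨e, Or.inr ⟨e.2, he⟩⟩ : S)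
  have hΦK : Φ.comp (Subgroup.inclusion hKL) = Ψ := by
    refine monoidHom_ext_of_closure_eq hD.1 fun d hd => ?_
    exact (hΦ ⟨d, hDE hd⟩).trans (dif_pos hd)
  suffices IsFreeBasis S (Subgroup.closure S) by rwa [hclosure] at this
  refine IsFreeBasis.of_monoidHom (Φ.comp (Subgroup.inclusion hclosure.le)) ?_
  rintro ⟨s, hs | ⟨hsE, hsD⟩⟩
  · calc Φ ⟨s, _⟩ = Ψ ⟨s, hC.subset hs⟩ := DFunLike.congr_fun hΦK ⟨s, hC.subset hs⟩
      _ = FreeGroup.of ⟨s, Or.inl hs⟩ := hΨ ⟨s, hs⟩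
  · exact (hΦ ⟨s, hsE⟩).trans (dif_neg hsD)

theorem FreeFactor.trans (hHK : FreeFactor H K) (hKL : FreeFactor K L) : FreeFactor H L := by
  obtain ⟨B, C, hB, hC, hBC⟩ := hHK
  obtain ⟨D, E, hD, hE, hDE⟩ := hKL
  exact ⟨B, _, hB, hC.union_sdiff hD hE hDE, hBC.trans Set.subset_union_left⟩

theorem FreeFactor.freeFactor_top_iff (hK : FreeFactor K (⊤ : Subgroup G)) (hHK : H ≤ K) :
    FreeFactor H (⊤ : Subgroup G) ↔ FreeFactor H K :=
  ⟨fun h => h.of_le hHK, fun h => h.trans hK⟩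

theorem IsFreeBasis.rk_le_rk_add_ncard {B C T : Set G} (hB : IsFreeBasis B H)
    (hBfin : B.Finite) (hC : IsFreeBasis C K) (hT : T.Finite)
    (hsup : H ⊔ Subgroup.closure T = K) : rk K ≤ rk H + T.ncard := by
  have hclosure : Subgroup.closure (B ∪ T) = K := by rw [Subgroup.closure_union, hB.1, hsup]
  rw [hB.rk_eq, hC.rk_eq]
  exact (hC.finite_and_ncard_le hclosure (hBfin.union hT)).2.trans (Set.ncard_union_le B T)

theorem IsFreeBasis.freeFactor_iff {B C : Set G} (hB : IsFreeBasis B H) (hBfin : B.Finite)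
    (hC : IsFreeBasis C K) (hCfin : C.Finite) :
    FreeFactor H K ↔
      ∃ T : Set G, T.Finite ∧ H ⊔ Subgroup.closure T = K ∧ rk H + T.ncard = rk K := by
  constructor
  · rintro ⟨B', C', hB', hC', hBC⟩
    have hC'fin : C'.Finite := (hC'.finite_and_ncard_le hC.1 hCfin).1
    refine ⟨C' \ B', hC'fin.sdiff, ?_, ?_⟩
    · rw [← hB'.1, ← Subgroup.closure_union, Set.union_sdiff_self,
        Set.union_eq_self_of_subset_left hBC, hC'.1]
    · rw [hB'.rk_eq, hC'.rk_eq, add_comm,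
        Set.ncard_sdiff_add_ncard_of_subset hBC hC'fin]
  · rintro ⟨T, hT, hsup, hcard⟩
    have hclosure : Subgroup.closure (B ∪ T) = K := by rw [Subgroup.closure_union, hB.1, hsup]
    refine ⟨B, B ∪ T, hB, hC.of_ncard_le hclosure (hBfin.union hT) ?_, Set.subset_union_left⟩
    calc (B ∪ T).ncard ≤ B.ncard + T.ncard := Set.ncard_union_le B T
      _ = C.ncard := by rw [← hB.rk_eq, hcard, hC.rk_eq]

end FreeFactor

section FreeGroups

variable {A : Type}

theorem isFreeBasis_range_of : IsFreeBasis (Set.range (FreeGroup.of (α := A))) ⊤ := by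
  rw [← FreeGroup.closure_range_of]
  refine IsFreeBasis.of_monoidHom
    ((FreeGroup.map (Set.rangeFactorization FreeGroup.of)).comp (Subgroup.subtype _)) ?_
  rintro ⟨_, a, rfl⟩
  exact FreeGroup.map.of

theorem isFreeBasis_image_of (A₀ : Set A) :
    IsFreeBasis (FreeGroup.of '' A₀) (Subgroup.closure (FreeGroup.of '' A₀)) :=
  isFreeBasis_range_of.mono (Set.image_subset_range _ _)

theorem freeFactor_closure_image_of (A₀ : Set A) :
    FreeFactor (Subgroup.closure (FreeGroup.of '' A₀)) ⊤ :=
  ⟨_, _, isFreeBasis_image_of A₀, isFreeBasis_range_of, Set.image_subset_range _ _⟩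

theorem rk_closure_image_of (A₀ : Set A) :
    rk (Subgroup.closure (FreeGroup.of '' A₀)) = A₀.ncard := by
  rw [(isFreeBasis_image_of A₀).rk_eq, Set.ncard_image_of_injective _ FreeGroup.of_injective]

theorem exists_finite_isFreeBasis {H : Subgroup (FreeGroup A)} (hH : H.FG) :
    ∃ B : Set (FreeGroup A), IsFreeBasis B H ∧ B.Finite := by
  obtain ⟨B, hB, -⟩ := isFreeBasis_range_of.exists_isFreeBasis_inter_subset H
  obtain ⟨S, hS⟩ := hH
  exact ⟨B, hB, (hB.finite_and_ncard_le hS S.finite_toSet).1⟩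

end FreeGroups

/-! ### Realizations of automata -/

namespace Autom

variable {A : Type} {M N K : Autom A}

/-- The set of letters of `A` occurring in the labels of the transitions of `M`. -/
def letters (M : Autom A) : Set A := {a | ∃ p b q, (p, (a, b), q) ∈ M.E}

/-- A realization of `M` in a set `X` acted upon by the free group: a map `θ` such that every
transition `(p, a, q)` satisfies `θ p = a • θ q`. Realizations turn questions about languages
into questions about actions: for `X` the set of cosets of a subgroup `L`, one of them sends
`q₀` to `L` if and only if `L(M)ρ ⊆ L`. -/
def IsRealization (M : Autom A) {X : Type} [MulAction (FreeGroup A) X] (θ : M.Q → X) : Prop :=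
  ∀ ⦃p a q⦄, (p, a, q) ∈ M.E → θ p = FreeGroup.mk [a] • θ q

section Paths

variable {p q r : M.Q} {u v : List (Ltr A)}

theorem PathOn.append {T : Set (M.Q × Ltr A × M.Q)} (hu : M.PathOn T p u q)
    (hv : M.PathOn T q v r) : M.PathOn T p (u ++ v) r := by
  induction hu with
  | nil => exact hv
  | cons he _ ih => exact PathOn.cons he (ih hv)

theorem path_singleton {a : Ltr A} (he : (p, a, q) ∈ M.E) : M.Path p [a] q :=
  PathOn.cons he (PathOn.nil q)

theorem Dual.path_invRev (hM : M.Dual) (hu : M.Path p u q) :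
    M.Path q (FreeGroup.invRev u) p := by
  unfold Path at hu ⊢
  induction hu with
  | nil => exact PathOn.nil _
  | cons he _ ih =>
    simpa [FreeGroup.invRev, Ltr.inv] using ih.append (path_singleton ((hM _ _ _).1 he))

theorem mk_mem_closure_of_path (hu : M.Path p u q) :
    FreeGroup.mk u ∈ Subgroup.closure (FreeGroup.of '' M.letters) := by
  unfold Path at hu
  induction hu with
  | nil => exact Subgroup.one_mem _
  | @cons p q r a w he _ ih =>
    rw [freeGroup_mk_cons]
    refine Subgroup.mul_mem _ ?_ ih
    have ha : FreeGroup.of a.1 ∈ Subgroup.closure (FreeGroup.of '' M.letters) :=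
      Subgroup.subset_closure ⟨a.1, ⟨p, a.2, q, he⟩, rfl⟩
    obtain ⟨a, _ | _⟩ := a
    · exact Subgroup.inv_mem _ ha
    · exact ha

theorem langRho_subset_closure_letters (M : Autom A) :
    M.langRho ⊆ Subgroup.closure (FreeGroup.of '' M.letters) := by
  rintro _ ⟨w, hw, rfl⟩
  exact mk_mem_closure_of_path hw

theorem IsRealization.apply_eq_of_path {X : Type} [MulAction (FreeGroup A) X] {θ : M.Q → X}
    (hθ : M.IsRealization θ) (hu : M.Path p u q) : θ p = FreeGroup.mk u • θ q := by
  unfold Path at hu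
  induction hu with
  | nil => exact (one_smul _ _).symm
  | cons he _ ih => rw [freeGroup_mk_cons, mul_smul, ← ih, hθ he]

theorem langRho_subset_of_isRealization {L : Subgroup (FreeGroup A)} {θ : M.Q → FreeGroup A ⧸ L}
    (hθ : M.IsRealization θ) (hinit : θ M.q0 = (1 : FreeGroup A)) : M.langRho ⊆ L := by
  rintro _ ⟨w, hw, rfl⟩
  have hfix := hθ.apply_eq_of_path hw
  rw [hinit, MulAction.Quotient.smul_coe, QuotientGroup.eq] at hfix
  simpa using hfix

theorem closure_langRho_of_subsingleton [Subsingleton M.Q] :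
    Subgroup.closure M.langRho = Subgroup.closure (FreeGroup.of '' M.letters) := by
  refine le_antisymm ((Subgroup.closure_le _).2 M.langRho_subset_closure_letters)
    ((Subgroup.closure_le _).2 ?_)
  rintro _ ⟨a, ⟨p, b, q, he⟩, rfl⟩
  rw [Subsingleton.elim p M.q0, Subsingleton.elim q M.q0] at he
  have hab : FreeGroup.mk [(a, b)] ∈ Subgroup.closure M.langRho :=
    Subgroup.subset_closure ⟨[(a, b)], path_singleton he, rfl⟩
  cases b
  · exact Subgroup.inv_mem_iff _ |>.1 hab
  · exact hab

end Paths

/-! ### Quotients and leafless automata -/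

/-- `N` is the quotient of `M` along the map `φ` on states. -/
structure IsQuotient (M N : Autom A) (φ : M.Q → N.Q) : Prop where
  surjective : Surjective φ
  map_init : φ M.q0 = N.q0
  mem_edges_iff : ∀ e : N.Q × Ltr A × N.Q,
    e ∈ N.E ↔ ∃ e' ∈ M.E, e = (φ e'.1, e'.2.1, φ e'.2.2)

/-- A dual automaton in which every state is reachable and every state other than `q₀` has
two transitions with distinct labels, so that no elementary reduction of type 2 applies. This
property passes to quotients, unlike being inverse and reduced. -/
structure IsLeafless (M : Autom A) : Prop where
  dual : M.Dual
  exists_path : ∀ q, ∃ u, M.Path M.q0 u q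
  exists_two_edges : ∀ q ≠ M.q0, ∃ a b r s, a ≠ b ∧ (q, a, r) ∈ M.E ∧ (q, b, s) ∈ M.E

namespace IsQuotient

variable {φ : M.Q → N.Q} {ψ : N.Q → K.Q}

theorem map_edge (h : IsQuotient M N φ) {p q : M.Q} {a : Ltr A} (he : (p, a, q) ∈ M.E) :
    (φ p, a, φ q) ∈ N.E :=
  (h.mem_edges_iff _).2 ⟨_, he, rfl⟩

theorem exists_edge (h : IsQuotient M N φ) {p q : N.Q} {a : Ltr A} (he : (p, a, q) ∈ N.E) :
    ∃ p' q', (p', a, q') ∈ M.E ∧ φ p' = p ∧ φ q' = q := by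
  obtain ⟨⟨p', a', q'⟩, he', heq⟩ := (h.mem_edges_iff _).1 he
  obtain ⟨rfl, rfl, rfl⟩ := by simpa only [Prod.mk.injEq] using heq
  exact ⟨p', q', he', rfl, rfl⟩

theorem comp (hψ : IsQuotient N K ψ) (hφ : IsQuotient M N φ) : IsQuotient M K (ψ ∘ φ) where
  surjective := hψ.surjective.comp hφ.surjective
  map_init := by rw [comp_apply, hφ.map_init, hψ.map_init]
  mem_edges_iff e := by
    constructor
    · obtain ⟨p, a, q⟩ := e
      intro he
      obtain ⟨p', q', he', rfl, rfl⟩ := hψ.exists_edge he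
      obtain ⟨p'', q'', he'', rfl, rfl⟩ := hφ.exists_edge he'
      exact ⟨_, he'', rfl⟩
    · rintro ⟨⟨p, a, q⟩, he, rfl⟩
      exact hψ.map_edge (hφ.map_edge he)

theorem map_path (h : IsQuotient M N φ) {p q : M.Q} {u : List (Ltr A)} (hu : M.Path p u q) :
    N.Path (φ p) u (φ q) := by
  unfold Path at hu ⊢
  induction hu with
  | nil => exact PathOn.nil _
  | cons he _ ih => exact PathOn.cons (h.map_edge he) ih

theorem letters_eq (h : IsQuotient M N φ) : N.letters = M.letters := by
  ext a
  constructor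
  · rintro ⟨p, b, q, he⟩
    obtain ⟨p', q', he', -⟩ := h.exists_edge he
    exact ⟨p', b, q', he'⟩
  · rintro ⟨p, b, q, he⟩
    exact ⟨_, b, _, h.map_edge he⟩

theorem isLeafless (h : IsQuotient M N φ) (hM : M.IsLeafless) : N.IsLeafless where
  dual := by
    have hinv : ∀ p a q, (p, a, q) ∈ N.E → (q, Ltr.inv a, p) ∈ N.E := by
      intro p a q he
      obtain ⟨p', q', he', rfl, rfl⟩ := h.exists_edge he
      exact h.map_edge ((hM.dual _ _ _).1 he')
    exact fun p a q => ⟨hinv p a q, fun he => by simpa [Ltr.inv] using hinv _ _ _ he⟩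
  exists_path q := by
    obtain ⟨q, rfl⟩ := h.surjective q
    obtain ⟨u, hu⟩ := hM.exists_path q
    exact ⟨u, h.map_init ▸ h.map_path hu⟩
  exists_two_edges q hq := by
    obtain ⟨q, rfl⟩ := h.surjective q
    obtain ⟨a, b, r, s, hab, ha, hb⟩ :=
      hM.exists_two_edges q (by rintro rfl; exact hq h.map_init)
    exact ⟨a, b, _, _, hab, h.map_edge ha, h.map_edge hb⟩

theorem exists_isRealization (h : IsQuotient M N φ) {X : Type} [MulAction (FreeGroup A) X]
    {θ : M.Q → X} (hθ : M.IsRealization θ) (hφ : θ.FactorsThrough φ) :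
    ∃ θ' : N.Q → X, N.IsRealization θ' ∧ ∀ x, θ' (φ x) = θ x := by
  have hfac : ∀ x, θ (surjInv h.surjective (φ x)) = θ x := fun x => hφ (surjInv_eq _ _)
  refine ⟨fun x => θ (surjInv h.surjective x), fun p a q he => ?_, hfac⟩
  obtain ⟨p', q', he', rfl, rfl⟩ := h.exists_edge he
  simp only [hfac, hθ he']

end IsQuotient

theorem PathOn.exists_of_append {T : Set (M.Q × Ltr A × M.Q)} {p q : M.Q} {u v : List (Ltr A)}
    (h : M.PathOn T p (u ++ v) q) : ∃ r, M.PathOn T p u r ∧ M.PathOn T r v q := by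
  induction u generalizing p with
  | nil => exact ⟨p, PathOn.nil p, h⟩
  | cons a u ih =>
    cases h with
    | cons he h =>
      obtain ⟨r, hu, hv⟩ := ih h
      exact ⟨r, PathOn.cons he hu, hv⟩

theorem PathOn.exists_edge_of_ne {T : Set (M.Q × Ltr A × M.Q)} {p q : M.Q} {u : List (Ltr A)}
    (hu : M.PathOn T p u q) (hqp : q ≠ p) : ∃ r a, r ≠ q ∧ (r, a, q) ∈ T := by
  induction hu with
  | nil => exact absurd rfl hqp
  | @cons p r q a _ he _ ih =>
    by_cases hqr : q = r
    · exact ⟨p, a, hqp.symm, hqr ▸ he⟩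
    · exact ih hqr

theorem Represents.isLeafless {H : Subgroup (FreeGroup A)} (h : M.Represents H) :
    M.IsLeafless := by
  obtain ⟨⟨-, htrim, hdual⟩, hred, -⟩ := h
  refine ⟨hdual, fun q => ?_, fun q hq => ?_⟩
  · obtain ⟨u, -, hu, -⟩ := htrim q
    exact ⟨u, hu⟩
  · obtain ⟨u, v, huv, hu, hv⟩ := hred q
    obtain rfl | ⟨u', a, rfl⟩ := u.eq_nil_or_concat'
    · cases hu
      exact absurd rfl hq
    cases hv with
    | nil => exact absurd rfl hq
    | @cons _ s _ b w hb _ =>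
      obtain ⟨r, -, hlast⟩ := hu.exists_of_append
      cases hlast with
      | cons ha hnil =>
        cases hnil
        refine ⟨Ltr.inv a, b, r, s, ?_, (hdual _ _ _).1 ha, hb⟩
        rintro rfl
        exact huv u' w a.1 a.2 (by simp [Ltr.inv])

namespace IsLeafless

theorem not_red2 (hM : M.IsLeafless) (N : Autom A) : ¬ Red2 M N := by
  rintro ⟨p, q, a, hq, -, -, honly, -⟩
  obtain ⟨u, hu⟩ := hM.exists_path q
  obtain ⟨r, b, hrq, hrb⟩ := hu.exists_edge_of_ne hq
  have hpq : p ≠ q := by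
    rintro rfl
    rcases honly _ hrb (Or.inr rfl) with h | h <;> exact hrq (congrArg Prod.fst h)
  have hout : ∀ c s, (q, c, s) ∈ M.E → c = Ltr.inv a := by
    intro c s hc
    rcases honly _ hc (Or.inl rfl) with h | h
    · exact absurd (congrArg Prod.fst h).symm hpq
    · exact congrArg (fun e => e.2.1) h
  obtain ⟨c, d, s, t, hcd, hc, hd⟩ := hM.exists_two_edges q hq
  exact hcd ((hout _ _ hc).trans (hout _ _ hd).symm)

theorem eq_of_reflTransGen_red2 (hM : M.IsLeafless) (h : Relation.ReflTransGen Red2 M N) :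
    M = N := by
  obtain h | ⟨K, h, -⟩ := Relation.ReflTransGen.cases_head h
  · exact h
  · exact absurd h (hM.not_red2 K)

theorem exists_coset_realizations (hM : M.IsLeafless) : ∃ u : M.Q → List (Ltr A),
    (∀ q, M.Path M.q0 (u q) q) ∧ ∀ L : Subgroup (FreeGroup A), M.langRho ⊆ L →
      M.IsRealization fun q => (((FreeGroup.mk (u q))⁻¹ : FreeGroup A) : FreeGroup A ⧸ L) := by
  choose u hu using hM.exists_path
  refine ⟨u, hu, fun L hL p a q he => ?_⟩
  rw [MulAction.Quotient.smul_coe, QuotientGroup.eq, inv_inv]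
  refine hL ⟨u p ++ [a] ++ FreeGroup.invRev (u q), ?_, ?_⟩
  · exact ((hu p).append (path_singleton he)).append (hM.dual.path_invRev (hu q))
  · simp [FreeGroup.mul_mk, FreeGroup.inv_mk]

end IsLeafless

/-! ### i-steps -/

/-- The map `φ : M → N` on states is a quotient map, and it is universal among those forced by
the equality of the states `p` and `q`: any realization of `M` which identifies `p` and `q`
comes from `N`. -/
structure IsUniversalQuotient (M N : Autom A) (φ : M.Q → N.Q) (p q : M.Q) : Prop
    extends IsQuotient M N φ where
  map_eq : φ p = φ q
  factorsThrough : ∀ {X : Type} [MulAction (FreeGroup A) X] {θ : M.Q → X},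
    M.IsRealization θ → θ p = θ q → θ.FactorsThrough φ

namespace IsUniversalQuotient

variable {φ : M.Q → N.Q} {ψ : N.Q → K.Q} {p q : M.Q}

theorem comp {r s : N.Q} (hφ : IsUniversalQuotient M N φ p q) (hψ : IsUniversalQuotient N K ψ r s)
    (hrs : ∀ {X : Type} [MulAction (FreeGroup A) X] {θ : N.Q → X}, N.IsRealization θ → θ r = θ s) :
    IsUniversalQuotient M K (ψ ∘ φ) p q where
  toIsQuotient := hψ.toIsQuotient.comp hφ.toIsQuotient
  map_eq := congrArg ψ hφ.map_eq
  factorsThrough hθ hpq x y hxy := by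
    obtain ⟨θ', hθ', hfac⟩ :=
      hφ.toIsQuotient.exists_isRealization hθ (hφ.factorsThrough hθ hpq)
    rw [← hfac, ← hfac]
    exact hψ.factorsThrough hθ' (hrs hθ') hxy

theorem of_isIdentification (h : M.IsIdentification p q N) :
    ∃ φ, IsUniversalQuotient M N φ p q := by
  obtain ⟨φ, hsurj, hinit, hker, hedge⟩ := h
  refine ⟨φ, ⟨hsurj, hinit, hedge⟩, (hker p q).2 (by simp), fun {X} _ θ _ hpq x y hxy => ?_⟩
  rcases (hker x y).1 hxy with rfl | ⟨rfl, rfl⟩ | ⟨rfl, rfl⟩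
  · rfl
  · exact hpq
  · exact hpq.symm

theorem exists_of_red1 (hφ : IsUniversalQuotient M N φ p q) (h : Red1 N K) :
    ∃ ψ, IsUniversalQuotient M K ψ p q := by
  obtain ⟨s, t, r, a, -, hs, ht, h⟩ := h
  obtain ⟨ψ, hψ⟩ := of_isIdentification h
  exact ⟨ψ ∘ φ, hφ.comp hψ fun hθ => smul_left_cancel _ ((hθ hs).symm.trans (hθ ht))⟩

theorem exists_of_reflTransGen_red1 (hφ : IsUniversalQuotient M N φ p q)
    (h : Relation.ReflTransGen Red1 N K) : ∃ ψ, IsUniversalQuotient M K ψ p q := by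
  induction h with
  | refl => exact ⟨φ, hφ⟩
  | tail _ h ih =>
    obtain ⟨ψ, hψ⟩ := ih
    exact hψ.exists_of_red1 h

theorem of_isomorphic (h : M.Isomorphic N) : ∃ φ, IsUniversalQuotient M N φ M.q0 M.q0 := by
  obtain ⟨φ, hφ, hφ'⟩ := h
  refine ⟨φ, ⟨φ.surjective, hφ.1, fun e => ⟨fun he => ?_, ?_⟩⟩, rfl,
    fun _ _ x y hxy => congrArg _ (φ.injective hxy)⟩
  · exact ⟨_, hφ'.2 _ _ _ he, by simp⟩
  · rintro ⟨⟨p, a, q⟩, he, rfl⟩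
    exact hφ.2 _ _ _ he

end IsUniversalQuotient

theorem Isomorphic.deterministic (h : M.Isomorphic N) (hM : M.Deterministic) :
    N.Deterministic := by
  obtain ⟨φ, -, hφ⟩ := h
  intro p a q q' hq hq'
  exact φ.symm.injective (hM _ _ _ _ (hφ.2 _ _ _ hq) (hφ.2 _ _ _ hq'))

theorem IsLeafless.exists_isUniversalQuotient (hM : M.IsLeafless) {p q : M.Q}
    (h : M.IStep p q N) : N.Deterministic ∧ ∃ φ, IsUniversalQuotient M N φ p q := by
  obtain ⟨-, N', N'', hident, ⟨M₁, hred1, hdet, hred2, -⟩, hiso⟩ := h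
  obtain ⟨φ, hφ⟩ := IsUniversalQuotient.of_isIdentification hident
  obtain ⟨ψ, hψ⟩ := hφ.exists_of_reflTransGen_red1 hred1
  obtain rfl := (hψ.toIsQuotient.isLeafless hM).eq_of_reflTransGen_red2 hred2
  obtain ⟨χ, hχ⟩ := IsUniversalQuotient.of_isomorphic hiso
  exact ⟨hiso.deterministic hdet, χ ∘ ψ, hψ.comp hχ fun _ => rfl⟩

theorem IsUniversalQuotient.exists_langRho_subset {φ : M.Q → N.Q} {p q : M.Q}
    (hφ : IsUniversalQuotient M N φ p q) (hM : M.IsLeafless) :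
    ∃ g ∈ Subgroup.closure (FreeGroup.of '' M.letters),
      N.langRho ⊆ Subgroup.closure (M.langRho ∪ {g}) := by
  obtain ⟨u, hu, hreal⟩ := hM.exists_coset_realizations
  refine ⟨FreeGroup.mk (u p) * (FreeGroup.mk (u q))⁻¹,
    Subgroup.mul_mem _ (mk_mem_closure_of_path (hu p))
      (Subgroup.inv_mem _ (mk_mem_closure_of_path (hu q))), ?_⟩
  set L := Subgroup.closure (M.langRho ∪ {FreeGroup.mk (u p) * (FreeGroup.mk (u q))⁻¹})
  have hL : M.langRho ⊆ L := Set.subset_union_left.trans Subgroup.subset_closure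
  have hpq : (((FreeGroup.mk (u p))⁻¹ : FreeGroup A) : FreeGroup A ⧸ L) =
      ((FreeGroup.mk (u q))⁻¹ : FreeGroup A) := by
    rw [QuotientGroup.eq, inv_inv]
    exact Subgroup.subset_closure (Or.inr rfl)
  obtain ⟨θ, hθ, hfac⟩ := hφ.toIsQuotient.exists_isRealization (hreal L hL)
    (hφ.factorsThrough (hreal L hL) hpq)
  refine langRho_subset_of_isRealization hθ ?_
  rw [← hφ.map_init, hfac, QuotientGroup.eq, inv_inv, mul_one]
  exact hL ⟨_, hu _, rfl⟩

theorem IsLeafless.exists_closure_union_eq {n : ℕ} {f : ℕ → Autom A} (h0 : (f 0).IsLeafless)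
    (hstep : ∀ i < n, IStepAny (f i) (f (i + 1))) (hcard : Nat.card (f n).Q = 1) :
    ∃ T : Set (FreeGroup A), T.Finite ∧ T.ncard ≤ n ∧
      Subgroup.closure ((f 0).langRho ∪ T) =
        Subgroup.closure (FreeGroup.of '' (f 0).letters) := by
  induction n generalizing f with
  | zero =>
    have : Subsingleton (f 0).Q := (Nat.card_eq_one_iff_unique.1 hcard).1
    exact ⟨∅, Set.finite_empty, by simp, by rw [Set.union_empty, closure_langRho_of_subsingleton]⟩
  | succ n ih =>
    obtain ⟨p, q, h⟩ := hstep 0 n.succ_pos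
    obtain ⟨-, φ, hφ⟩ := h0.exists_isUniversalQuotient h
    obtain ⟨T, hT, hTcard, hclosure⟩ := ih (f := fun i => f (i + 1))
      (hφ.toIsQuotient.isLeafless h0) (fun i hi => hstep (i + 1) (by lia)) hcard
    obtain ⟨g, hg, hlang⟩ := hφ.exists_langRho_subset h0
    rw [hφ.toIsQuotient.letters_eq] at hclosure
    refine ⟨insert g T, hT.insert g, (Set.ncard_insert_le g T).trans (by lia), le_antisymm ?_ ?_⟩
    · have hTle : T ⊆ Subgroup.closure (FreeGroup.of '' (f 0).letters) :=
        hclosure ▸ Set.subset_union_right.trans Subgroup.subset_closure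
      exact (Subgroup.closure_le _).2 (Set.union_subset (f 0).langRho_subset_closure_letters
        (Set.insert_subset hg hTle))
    · rw [← hclosure, Subgroup.closure_le]
      refine Set.union_subset (hlang.trans (Subgroup.closure_mono ?_)) ?_
      · exact Set.union_subset_union_right _ (by simp)
      · exact (Set.subset_insert g T).trans
          (Set.subset_union_right.trans Subgroup.subset_closure)

theorem exists_isIdentification (M : Autom A) [Finite M.Q] {p q : M.Q} (hpq : p ≠ q) :
    ∃ N, M.IsIdentification p q N ∧ Finite N.Q ∧ Nat.card N.Q < Nat.card M.Q := by
  classical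
  let φ : M.Q → {x : M.Q // x ≠ q} := fun x => if h : x = q then ⟨p, hpq⟩ else ⟨x, h⟩
  have hφ : ∀ x, (φ x : M.Q) = if x = q then p else x := fun x => by
    simp only [φ]
    split <;> rfl
  refine ⟨⟨{x : M.Q // x ≠ q}, φ M.q0, {e | ∃ e' ∈ M.E, e = (φ e'.1, e'.2.1, φ e'.2.2)}⟩,
    ⟨φ, fun x => ⟨x, Subtype.ext (by simp [hφ, x.2])⟩, rfl, fun x y => ?_, fun e => Iff.rfl⟩,
    Subtype.finite, Finite.card_subtype_lt (x := q) (by simp)⟩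
  refine Subtype.ext_iff.trans ?_
  rw [hφ, hφ]
  grind

theorem exists_reflTransGen_red1_deterministic (M : Autom A) [Finite M.Q] :
    ∃ N, Relation.ReflTransGen Red1 M N ∧ N.Deterministic ∧ Finite N.Q := by
  induction hn : Nat.card M.Q using Nat.strong_induction_on generalizing M with
  | _ n ih =>
    by_cases hdet : M.Deterministic
    · exact ⟨M, Relation.ReflTransGen.refl, hdet, inferInstance⟩
    unfold Deterministic at hdet
    push Not at hdet
    obtain ⟨r, a, p, q, hp, hq, hpq⟩ := hdet
    obtain ⟨N, hident, _, hcard⟩ := M.exists_isIdentification hpq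
    obtain ⟨K, hred, hK⟩ := ih _ (hn ▸ hcard) N rfl
    exact ⟨K, Relation.ReflTransGen.head ⟨p, q, r, a, hpq, hp, hq, hident⟩ hred, hK⟩

theorem IsLeafless.exists_iStep (hM : M.IsLeafless) [Finite M.Q] {p q : M.Q} (hpq : p ≠ q) :
    ∃ N, M.IStep p q N ∧ Finite N.Q := by
  obtain ⟨N', hident, _, -⟩ := M.exists_isIdentification hpq
  obtain ⟨N, hred, hdet, hfin⟩ := N'.exists_reflTransGen_red1_deterministic
  obtain ⟨φ, hφ⟩ := IsUniversalQuotient.of_isIdentification hident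
  obtain ⟨ψ, hψ⟩ := hφ.exists_of_reflTransGen_red1 hred
  exact ⟨N, ⟨hpq, N', N, hident,
    ⟨N, hred, hdet, Relation.ReflTransGen.refl, (hψ.toIsQuotient.isLeafless hM).not_red2⟩,
    Equiv.refl _, ⟨rfl, fun _ _ _ h => h⟩, ⟨rfl, fun _ _ _ h => h⟩⟩, hfin⟩

end Autom

/-! ### Collapsing systems of equations -/

section Systems

variable {A V X : Type}

/-- The positive form of a labelled edge: `(p, a⁻¹, q)` becomes `(q, a, p)`. -/
def orient (e : V × Ltr A × V) : V × A × V :=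
  if e.2.1.2 then (e.1, e.2.1.1, e.2.2) else (e.2.2, e.2.1.1, e.1)

/-- The map `θ` from a set `V` of unknowns to a set `X` acted upon by the free group solves the
system consisting of the equations `θ x = a • θ y` for the edges `(x, a, y)` in `E`, `θ x = θ y`
for the pairs `(x, y)` in `P` and `θ x = w • θ y` for the arcs `(x, w, y)` in `R`. -/
structure IsSolution [MulAction (FreeGroup A) X] (E : Set (V × A × V)) (P : List (V × V))
    (R : List (V × List (Ltr A) × V)) (θ : V → X) : Prop where
  edge : ∀ e ∈ E, θ e.1 = FreeGroup.of e.2.1 • θ e.2.2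
  pair : ∀ p ∈ P, θ p.1 = θ p.2
  arc : ∀ r ∈ R, θ r.1 = FreeGroup.mk r.2.1 • θ r.2.2

/-- All solutions of the system with edges `E`, pairs `P` and arcs `R` are constant. -/
def Collapses (E : Set (V × A × V)) (P : List (V × V)) (R : List (V × List (Ltr A) × V)) : Prop :=
  ∀ ⦃X : Type⦄ [MulAction (FreeGroup A) X] (θ : V → X), IsSolution E P R θ → ∀ x y, θ x = θ y

section IsSolution

variable [MulAction (FreeGroup A) X] {E : Set (V × A × V)} {P : List (V × V)}
  {R : List (V × List (Ltr A) × V)} {θ : V → X}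

theorem isSolution_iff :
    IsSolution E P R θ ↔
      (∀ e ∈ E, θ e.1 = FreeGroup.of e.2.1 • θ e.2.2) ∧ (∀ p ∈ P, θ p.1 = θ p.2) ∧
        ∀ r ∈ R, θ r.1 = FreeGroup.mk r.2.1 • θ r.2.2 :=
  ⟨fun h => ⟨h.edge, h.pair, h.arc⟩, fun ⟨hE, hP, hR⟩ => ⟨hE, hP, hR⟩⟩

theorem isSolution_insert {e : V × A × V} :
    IsSolution (insert e E) P R θ ↔
      θ e.1 = FreeGroup.of e.2.1 • θ e.2.2 ∧ IsSolution E P R θ := by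
  simp only [isSolution_iff, Set.forall_mem_insert, and_assoc]

theorem isSolution_cons_pair {p : V × V} :
    IsSolution E (p :: P) R θ ↔ θ p.1 = θ p.2 ∧ IsSolution E P R θ := by
  simp only [isSolution_iff, List.forall_mem_cons]
  tauto

theorem isSolution_cons_arc {r : V × List (Ltr A) × V} :
    IsSolution E P (r :: R) θ ↔
      θ r.1 = FreeGroup.mk r.2.1 • θ r.2.2 ∧ IsSolution E P R θ := by
  simp only [isSolution_iff, List.forall_mem_cons]
  tauto

theorem isSolution_map {U : Type} {E : Set (U × A × U)} {P : List (U × U)}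
    {R : List (U × List (Ltr A) × U)} (f : U → V) :
    IsSolution (Prod.map f (Prod.map id f) '' E) (P.map (Prod.map f f))
      (R.map (Prod.map f (Prod.map id f))) θ ↔ IsSolution E P R (θ ∘ f) := by
  simp only [isSolution_iff, Set.forall_mem_image, List.forall_mem_map]
  rfl

theorem apply_orient_eq_smul_iff (e : V × Ltr A × V) :
    θ (orient e).1 = FreeGroup.of (orient e).2.1 • θ (orient e).2.2 ↔
      θ e.1 = FreeGroup.mk [e.2.1] • θ e.2.2 := by
  obtain ⟨x, ⟨a, _ | _⟩, y⟩ := e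
  · have hinv : (FreeGroup.mk [(a, false)] : FreeGroup A) = (FreeGroup.of a)⁻¹ := rfl
    simp only [orient, hinv, Bool.false_eq_true, if_false, eq_inv_smul_iff]
    exact eq_comm
  · rfl

end IsSolution

theorem orient_label (e : V × Ltr A × V) : (orient e).2.1 = e.2.1.1 := by
  unfold orient
  split <;> rfl

theorem exists_mulAction_of_edges [Finite X] {E : Set (V × A × V)} {π : V → X}
    (hE : ∀ a x y x' y', (x, a, y) ∈ E → (x', a, y') ∈ E → (π x = π x' ↔ π y = π y')) :
    ∃ _ : MulAction (FreeGroup A) X, ∀ e ∈ E, π e.1 = FreeGroup.of e.2.1 • π e.2.2 := by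
  obtain ⟨act, hact⟩ := exists_mulAction_of_biUnique
    (r := fun a y x => ∃ u v, (u, a, v) ∈ E ∧ π v = y ∧ π u = x) fun a => by
      constructor
      · rintro _ _ _ ⟨u, v, he, rfl, rfl⟩ ⟨u', v', he', rfl, hu⟩
        exact (hE _ _ _ _ _ he he').1 hu.symm
      · rintro _ _ _ ⟨u, v, he, rfl, rfl⟩ ⟨u', v', he', hv, rfl⟩
        exact (hE _ _ _ _ _ he he').2 hv.symm
  exact ⟨act, fun ⟨u, a, v⟩ he => (hact a _ _ ⟨u, v, he, rfl, rfl⟩).symm⟩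

/-- Equality of two unknowns in all solutions of the system with edges `E` and pairs `P`. -/
def forcedSetoid (E : Set (V × A × V)) (P : List (V × V)) : Setoid V where
  r x y := ∀ ⦃X : Type⦄ [MulAction (FreeGroup A) X] (θ : V → X), IsSolution E P [] θ → θ x = θ y
  iseqv :=
    ⟨fun _ _ _ _ _ => rfl, fun h _ _ θ hθ => (h θ hθ).symm,
      fun h h' _ _ θ hθ => (h θ hθ).trans (h' θ hθ)⟩

theorem forcedSetoid_iff_of_mem {E : Set (V × A × V)} {P : List (V × V)} {a : A} {x y x' y' : V}
    (he : (x, a, y) ∈ E) (he' : (x', a, y') ∈ E) :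
    forcedSetoid E P x x' ↔ forcedSetoid E P y y' := by
  have hiff : ∀ ⦃X : Type⦄ [MulAction (FreeGroup A) X] (θ : V → X), IsSolution E P [] θ →
      (θ x = θ x' ↔ θ y = θ y') := fun X _ θ hθ => by
    rw [hθ.edge _ he, hθ.edge _ he', smul_left_cancel_iff]
  exact ⟨fun h X _ θ hθ => (hiff θ hθ).1 (h θ hθ), fun h X _ θ hθ => (hiff θ hθ).2 (h θ hθ)⟩

namespace Collapses

variable {E : Set (V × A × V)} {P : List (V × V)} {R : List (V × List (Ltr A) × V)}

/-- If no pair can replace the edge `e = (x, a, y)`, then neither of its ends is forced to agree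
with the corresponding end of an edge of `E` labelled `a`. The quotient of `V` by the forced
equalities then solves the system, edge `e` included, without being constant. -/
theorem exists_cons_pair_of_insert_edge [Finite V] {e : V × A × V} (he : ∃ e' ∈ E, e'.2.1 = e.2.1)
    (h : Collapses (insert e E) P []) : ∃ p, Collapses E (p :: P) [] := by
  obtain ⟨x, a, y⟩ := e
  by_contra! hnone
  have hleft : ∀ x' y', (x', a, y') ∈ E → ¬ forcedSetoid E P x x' := fun x' y' he hx =>
    hnone (y, y') fun X _ θ hθ => by
      obtain ⟨hyy', hθ⟩ := isSolution_cons_pair.1 hθ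
      refine h θ (isSolution_insert.2 ⟨?_, hθ⟩)
      calc θ x = FreeGroup.of a • θ y' := (hx θ hθ).trans (hθ.edge _ he)
        _ = FreeGroup.of a • θ y := congrArg _ hyy'.symm
  have hright : ∀ x' y', (x', a, y') ∈ E → ¬ forcedSetoid E P y y' := fun x' y' he hy =>
    hnone (x, x') fun X _ θ hθ => by
      obtain ⟨hxx', hθ⟩ := isSolution_cons_pair.1 hθ
      refine h θ (isSolution_insert.2 ⟨?_, hθ⟩)
      calc θ x = FreeGroup.of a • θ y' := hxx'.trans (hθ.edge _ he)
        _ = FreeGroup.of a • θ y := congrArg _ (hy θ hθ).symm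
  let := forcedSetoid E P
  obtain ⟨_, hact⟩ := exists_mulAction_of_edges
    (E := insert (x, a, y) E) (π := Quotient.mk (forcedSetoid E P)) <| by
      simp only [Quotient.eq]
      rintro b u v u' v' (he | he) (he' | he')
      · cases he; cases he'
        exact iff_of_true (Setoid.refl _) (Setoid.refl _)
      · cases he
        exact iff_of_false (hleft _ _ he') (hright _ _ he')
      · cases he'
        exact iff_of_false (hleft _ _ he ∘ Setoid.symm) (hright _ _ he ∘ Setoid.symm)
      · exact forcedSetoid_iff_of_mem he he'
  obtain ⟨⟨x', _, y'⟩, he, rfl⟩ := he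
  exact hleft x' y' he <| Quotient.exact <| h (Quotient.mk (forcedSetoid E P))
    ⟨hact, fun p hp => Quotient.sound fun _ _ _ hθ => hθ.pair p hp, by simp⟩ x x'

theorem exists_of_option_unknowns [Nonempty V] {P : List (Option V × Option V)}
    (h : Collapses (Prod.map some (Prod.map id some) '' E) P []) :
    ∃ P', P'.length + 1 ≤ P.length ∧ Collapses E P' [] := by
  obtain ⟨p, hp, v, hv⟩ : ∃ p ∈ P, ∃ v, p = (none, some v) ∨ p = (some v, none) := by
    by_contra! hP
    let := MulAction.compHom Bool (1 : FreeGroup A →* Equiv.Perm Bool)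
    refine Bool.false_ne_true
      (h Option.isSome ⟨?_, ?_, by simp⟩ none (some (Classical.arbitrary V)))
    · exact Set.forall_mem_image.2 fun _ _ => rfl
    · rintro ⟨_ | x, _ | y⟩ hxy
      · rfl
      · exact absurd rfl (hP _ hxy y).1
      · exact absurd rfl (hP _ hxy x).2
      · rfl
  obtain ⟨P₁, P₂, rfl⟩ := List.append_of_mem hp
  refine ⟨(P₁ ++ P₂).map (Prod.map (Option.getD · v) (Option.getD · v)), by simp, ?_⟩
  intro X _ θ hθ x y
  refine h (fun o => θ (o.getD v)) ⟨?_, fun p' hp' => ?_, by simp⟩ (some x) (some y)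
  · exact Set.forall_mem_image.2 hθ.edge
  · obtain rfl | hp' : p' = p ∨ p' ∈ P₁ ++ P₂ := by grind
    · obtain rfl | rfl := hv <;> rfl
    · exact hθ.pair _ (List.mem_map_of_mem hp')

theorem cons_pair_of_cons_nil {x y : V} (h : Collapses E P ((x, [], y) :: R)) :
    Collapses E ((x, y) :: P) R := by
  intro X _ θ hθ
  obtain ⟨hxy, hθ⟩ := isSolution_cons_pair.1 hθ
  exact h θ (isSolution_cons_arc.2 ⟨hxy.trans (one_smul _ _).symm, hθ⟩)

theorem subdivide {x y : V} {c : Ltr A} {w : List (Ltr A)} (hc : ∃ e ∈ E, e.2.1 = c.1)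
    (h : Collapses E P ((x, c :: w, y) :: R)) :
    Collapses (insert (orient (some x, c, none)) (Prod.map some (Prod.map id some) '' E))
      (P.map (Prod.map some some))
      ((none, w, some y) :: R.map (Prod.map some (Prod.map id some))) := by
  intro X _ θ hθ
  obtain ⟨hnew, hθ⟩ := isSolution_insert.1 hθ
  obtain ⟨hw, hθ⟩ := isSolution_cons_arc.1 hθ
  rw [apply_orient_eq_smul_iff] at hnew
  rw [isSolution_map] at hθ
  have hconst : ∀ u v, θ (some u) = θ (some v) := by
    refine h (θ ∘ some) (isSolution_cons_arc.2 ⟨?_, hθ⟩)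
    rw [freeGroup_mk_cons, mul_smul, comp_apply, comp_apply, ← hw, hnew]
  have hfix : θ (some x) = FreeGroup.mk [c] • θ (some x) := by
    obtain ⟨e, he, hec⟩ := hc
    have hloop : θ (some x) = FreeGroup.of c.1 • θ (some x) :=
      calc θ (some x) = FreeGroup.of e.2.1 • θ (some e.2.2) := (hconst x e.1).trans (hθ.edge e he)
        _ = FreeGroup.of c.1 • θ (some x) := by rw [hec, hconst e.2.2 x]
    refine (apply_orient_eq_smul_iff (some x, c, some x)).1 ?_
    obtain ⟨a, _ | _⟩ := c <;> exact hloop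
  have hnone : θ none = θ (some x) := smul_left_cancel _ (hnew.symm.trans hfix)
  have hall : ∀ o, θ o = θ (some x) := Option.forall.2 ⟨hnone, fun u => hconst u x⟩
  exact fun u v => (hall u).trans (hall v).symm

/-- Each arc is traded for a pair. An arc `c w` is subdivided at a new unknown: the arc `w` is
traded first, then the edge `c`, and one of the two pairs thus obtained is used up in eliminating
the new unknown. -/
theorem exists_pairs_of_arcs {V : Type} [Finite V] [Nonempty V] {E : Set (V × A × V)}
    {P : List (V × V)} {R : List (V × List (Ltr A) × V)}
    (hR : ∀ r ∈ R, ∀ c ∈ r.2.1, ∃ e ∈ E, e.2.1 = c.1) (h : Collapses E P R) :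
    ∃ P', P'.length ≤ P.length + R.length ∧ Collapses E P' [] := by
  match R with
  | [] => exact ⟨P, le_rfl, h⟩
  | (x, [], y) :: R =>
    obtain ⟨P', hlen, hP'⟩ :=
      exists_pairs_of_arcs (List.forall_mem_cons.1 hR).2 h.cons_pair_of_cons_nil
    exact ⟨P', by simp only [List.length_cons] at hlen ⊢; lia, hP'⟩
  | (x, c :: w, y) :: R =>
    obtain ⟨hcw, hR⟩ := List.forall_mem_cons.1 hR
    obtain ⟨hc, hw⟩ := List.forall_mem_cons.1 hcw
    have hlabel : ∀ {a}, (∃ e ∈ E, e.2.1 = a) →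
        ∃ e ∈ Prod.map some (Prod.map id some) '' E, e.2.1 = a := by
      rintro _ ⟨e, he, rfl⟩
      exact ⟨_, ⟨e, he, rfl⟩, rfl⟩
    obtain ⟨P₁, hlen₁, hP₁⟩ := exists_pairs_of_arcs (fun r hr d hd => by
      obtain ⟨e, he, hed⟩ : ∃ e ∈ Prod.map some (Prod.map id some) '' E, e.2.1 = d.1 := by
        obtain rfl | hr := List.mem_cons.1 hr
        · exact hlabel (hw d hd)
        · obtain ⟨r', hr', rfl⟩ := List.mem_map.1 hr
          exact hlabel (hR r' hr' d hd)
      exact ⟨e, Set.mem_insert_of_mem _ he, hed⟩) (h.subdivide hc)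
    obtain ⟨p, hp⟩ := exists_cons_pair_of_insert_edge
      (by rw [orient_label]; exact hlabel hc) hP₁
    obtain ⟨P', hlen, hP'⟩ := hp.exists_of_option_unknowns
    exact ⟨P', by simp at hlen₁ hlen ⊢; lia, hP'⟩
termination_by (R.map fun r => r.2.1.length + 1).sum
decreasing_by all_goals simp [comp_def]

end Collapses

end Systems

/-! ### Sequences of i-steps -/

theorem exists_mk_eq_of_mem_closure_image_of {A : Type} {A₀ : Set A} {g : FreeGroup A}
    (hg : g ∈ Subgroup.closure (FreeGroup.of '' A₀)) :
    ∃ w : List (Ltr A), FreeGroup.mk w = g ∧ ∀ c ∈ w, c.1 ∈ A₀ := by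
  induction hg using Subgroup.closure_induction with
  | mem _ hx =>
    obtain ⟨a, ha, rfl⟩ := hx
    exact ⟨[(a, true)], rfl, by simpa using ha⟩
  | one => exact ⟨[], rfl, by simp⟩
  | mul _ _ _ _ hx hy =>
    obtain ⟨u, rfl, hu⟩ := hx
    obtain ⟨v, rfl, hv⟩ := hy
    exact ⟨u ++ v, FreeGroup.mul_mk.symm, List.forall_mem_append.2 ⟨hu, hv⟩⟩
  | inv _ _ hx =>
    obtain ⟨u, rfl, hu⟩ := hx
    exact ⟨FreeGroup.invRev u, FreeGroup.inv_mk.symm,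
      by simpa [FreeGroup.invRev, and_comm] using hu⟩

namespace Autom

variable {A : Type} {M N : Autom A}

theorem isRealization_iff_forall_mem_orient {X : Type} [MulAction (FreeGroup A) X]
    {θ : M.Q → X} :
    M.IsRealization θ ↔ ∀ e ∈ orient '' M.E, θ e.1 = FreeGroup.of e.2.1 • θ e.2.2 := by
  simp only [Set.forall_mem_image, apply_orient_eq_smul_iff]
  exact ⟨fun h _ he => h he, fun h _ _ _ he => h he⟩

theorem Dual.mem_image_orient_iff (hM : M.Dual) {p q : M.Q} {a : A} :
    (p, a, q) ∈ orient '' M.E ↔ (p, (a, true), q) ∈ M.E := by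
  refine ⟨?_, fun he => ⟨_, he, rfl⟩⟩
  rintro ⟨⟨p', ⟨a', _ | _⟩, q'⟩, he, heq⟩
  · cases heq
    exact (hM _ _ _).1 he
  · cases heq
    exact he

theorem exists_mulAction_isRealization_id [Finite M.Q] (hdual : M.Dual)
    (hdet : M.Deterministic) : ∃ _ : MulAction (FreeGroup A) M.Q, M.IsRealization id := by
  obtain ⟨act, hact⟩ := exists_mulAction_of_edges (E := orient '' M.E) (π := id) <| by
    simp only [hdual.mem_image_orient_iff, id]
    refine fun a x y x' y' he he' => ⟨?_, ?_⟩
    · rintro rfl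
      exact hdet _ _ _ _ he he'
    · rintro rfl
      exact hdet _ _ _ _ ((hdual _ _ _).1 he) ((hdual _ _ _).1 he')
  exact ⟨act, isRealization_iff_forall_mem_orient.2 hact⟩

theorem IsQuotient.collapses {φ : M.Q → N.Q} (hφ : IsQuotient M N φ) {P : List (M.Q × M.Q)}
    (h : Collapses (orient '' M.E) P []) :
    Collapses (orient '' N.E) (P.map (Prod.map φ φ)) [] := by
  intro X _ θ hθ
  have hreal : M.IsRealization (θ ∘ φ) := fun p a q he =>
    isRealization_iff_forall_mem_orient.2 hθ.edge (hφ.map_edge he)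
  refine hφ.surjective.forall₂.2 (h (θ ∘ φ)
    ⟨isRealization_iff_forall_mem_orient.1 hreal, fun p hp => ?_, by simp⟩)
  exact hθ.pair _ (List.mem_map_of_mem hp)

theorem IsLeafless.exists_iSteps_of_collapses (hM : M.IsLeafless) (hdet : M.Deterministic)
    [Finite M.Q] {P : List (M.Q × M.Q)} (h : Collapses (orient '' M.E) P []) :
    ∃ k ≤ P.length, ∃ f : ℕ → Autom A, f 0 = M ∧ (∀ i < k, IStepAny (f i) (f (i + 1))) ∧
      Nat.card (f k).Q = 1 := by
  induction hP : P.length generalizing M with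
  | zero =>
    obtain rfl := List.eq_nil_of_length_eq_zero hP
    obtain ⟨_, hid⟩ := exists_mulAction_isRealization_id hM.dual hdet
    have hsub : ∀ p q : M.Q, p = q :=
      h id ⟨isRealization_iff_forall_mem_orient.1 hid, by simp, by simp⟩
    exact ⟨0, le_rfl, fun _ => M, rfl, by simp, Nat.card_eq_one_iff_unique.2 ⟨⟨hsub⟩, ⟨M.q0⟩⟩⟩
  | succ n ih =>
    obtain ⟨⟨p, q⟩, P, rfl⟩ := List.exists_cons_of_length_eq_add_one hP
    obtain hP : P.length = n := by simpa using hP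
    by_cases hpq : p = q
    · obtain ⟨k, hk, hf⟩ := ih hM hdet
        (fun _ _ θ hθ => h θ (isSolution_cons_pair.2 ⟨congrArg θ hpq, hθ⟩)) hP
      exact ⟨k, hk.trans n.le_succ, hf⟩
    · obtain ⟨N, hstep, _⟩ := hM.exists_iStep hpq
      obtain ⟨hNdet, φ, hφ⟩ := hM.exists_isUniversalQuotient hstep
      have hN : Collapses (orient '' N.E) (P.map (Prod.map φ φ)) [] := fun _ _ θ hθ =>
        hφ.toIsQuotient.collapses h θ (isSolution_cons_pair.2 ⟨congrArg θ hφ.map_eq, hθ⟩)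
      obtain ⟨k, hk, f, hf0, hf, hcard⟩ :=
        ih (hφ.toIsQuotient.isLeafless hM) hNdet hN (by simpa using hP)
      refine ⟨k + 1, Nat.succ_le_succ hk, fun i => Nat.casesOn i M f, rfl, fun i hi => ?_, hcard⟩
      cases i with
      | zero => subst hf0; exact ⟨p, q, hstep⟩
      | succ i => exact hf i (Nat.lt_of_succ_lt_succ hi)

/-- Any solution of the system of `M` together with the loops at `q₀` labelled by words for the
elements of `T` has its value at `q₀` fixed by `langRho M ∪ T`, hence by all letters of `M`. -/
theorem IsLeafless.exists_iSteps (hM : M.IsLeafless) (hdet : M.Deterministic) [Finite M.Q]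
    {T : Set (FreeGroup A)} (hT : T.Finite)
    (hclosure : Subgroup.closure (M.langRho ∪ T) = Subgroup.closure (FreeGroup.of '' M.letters)) :
    ∃ k ≤ T.ncard, ∃ f : ℕ → Autom A, f 0 = M ∧ (∀ i < k, IStepAny (f i) (f (i + 1))) ∧
      Nat.card (f k).Q = 1 := by
  have hword : ∀ t ∈ T, ∃ w : List (Ltr A), FreeGroup.mk w = t ∧ ∀ c ∈ w, c.1 ∈ M.letters :=
    fun t ht => exists_mk_eq_of_mem_closure_image_of
      (hclosure ▸ Subgroup.subset_closure (Or.inr ht))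
  choose! word hmk hletters using hword
  let R : List (M.Q × List (Ltr A) × M.Q) :=
    hT.toFinset.toList.map fun t => (M.q0, word t, M.q0)
  have hlabels : ∀ r ∈ R, ∀ c ∈ r.2.1, ∃ e ∈ orient '' M.E, e.2.1 = c.1 := by
    refine List.forall_mem_map.2 fun t ht c hc => ?_
    obtain ⟨p, b, q, he⟩ := hletters t (by simpa using ht) c hc
    exact ⟨_, ⟨_, he, rfl⟩, orient_label _⟩
  have hR : Collapses (orient '' M.E) [] R := by
    intro X _ θ hθ
    have hreal : M.IsRealization θ := isRealization_iff_forall_mem_orient.2 hθ.edge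
    have hstab : Subgroup.closure (FreeGroup.of '' M.letters) ≤
        MulAction.stabilizer (FreeGroup A) (θ M.q0) := by
      rw [← hclosure, Subgroup.closure_le]
      rintro _ (⟨w, hw, rfl⟩ | ht)
      · exact (hreal.apply_eq_of_path hw).symm
      · have harc := hθ.arc _ (List.mem_map_of_mem (by simpa using ht))
        rw [hmk _ ht] at harc
        exact harc.symm
    have hall : ∀ q, θ q = θ M.q0 := fun q => by
      obtain ⟨u, hu⟩ := hM.exists_path q
      refine smul_left_cancel (FreeGroup.mk u) ?_
      rw [← hreal.apply_eq_of_path hu]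
      exact (hstab (mk_mem_closure_of_path hu)).symm
    exact fun p q => (hall p).trans (hall q).symm
  have : Nonempty M.Q := ⟨M.q0⟩
  obtain ⟨P, hlen, hP⟩ := hR.exists_pairs_of_arcs hlabels
  obtain ⟨k, hk, hf⟩ := hM.exists_iSteps_of_collapses hdet hP
  refine ⟨k, (hk.trans hlen).trans_eq ?_, hf⟩
  simp [R, Set.ncard_eq_toFinset_card T hT]

end Autom

/-- Corollary 3.3: with `A₀` the set of letters occurring in `Γ_A(H)` and
`d = |A₀| - rank H`, `H ≤ff F(A)` iff `d ≥ 0` and `Γ_A(H)` can be transformed into a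
one-state automaton by a sequence of `d` i-steps. -/
theorem free_factor_of_ambient_iff
    {A : Type} (H : Subgroup (FreeGroup A)) (hHfg : H.FG)
    (M : Autom A) (hM : M.Represents H) (hfin : Finite M.Q)
    (A0 : Set A) (hA0 : A0 = {a | ∃ p b q, (p, (a, b), q) ∈ M.E}) (hA0fin : A0.Finite) :
    FreeFactor H (⊤ : Subgroup (FreeGroup A)) ↔
      rk H ≤ A0.ncard ∧
      ∃ f : ℕ → Autom A, f 0 = M ∧
        (∀ i < A0.ncard - rk H, Autom.IStepAny (f i) (f (i + 1))) ∧
        Nat.card (f (A0.ncard - rk H)).Q = 1 := by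
  obtain rfl : A0 = M.letters := hA0
  have hclosure (T : Set (FreeGroup A)) :
      Subgroup.closure (M.langRho ∪ T) = H ⊔ Subgroup.closure T := by
    rw [Subgroup.closure_union, hM.2.2, Subgroup.closure_eq]
  have hle : H ≤ Subgroup.closure (FreeGroup.of '' M.letters) :=
    SetLike.coe_subset_coe.1 (hM.2.2 ▸ M.langRho_subset_closure_letters)
  obtain ⟨B, hB, hBfin⟩ := exists_finite_isFreeBasis hHfg
  have hC := isFreeBasis_image_of M.letters
  rw [(freeFactor_closure_image_of M.letters).freeFactor_top_iff hle,
    hB.freeFactor_iff hBfin hC (hA0fin.image _), rk_closure_image_of]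
  constructor
  · rintro ⟨T, hT, hsup, hcard⟩
    obtain ⟨k, hk, f, rfl, hf, hone⟩ :=
      hM.isLeafless.exists_iSteps hM.1.1 hT ((hclosure T).trans hsup)
    obtain ⟨S, hS, hSk, hSsup⟩ := hM.isLeafless.exists_closure_union_eq hf hone
    have hlow := rk_closure_image_of (f 0).letters ▸
      hB.rk_le_rk_add_ncard hBfin hC hS ((hclosure S).symm.trans hSsup)
    obtain rfl : (f 0).letters.ncard - rk H = k := by lia
    exact ⟨by lia, f, rfl, hf, hone⟩
  · rintro ⟨hrk, f, rfl, hf, hone⟩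
    obtain ⟨T, hT, hTd, hTsup⟩ := hM.isLeafless.exists_closure_union_eq hf hone
    have hsup := (hclosure T).symm.trans hTsup
    have hlow := rk_closure_image_of (f 0).letters ▸ hB.rk_le_rk_add_ncard hBfin hC hT hsup
    exact ⟨T, hT, hsup, by lia⟩
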